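/- arXiv:math/0609235 — 2 statements merged into one kernel-verified Lean document; each statement's English description precedes it below -/
import Mathlib

section
/- (Relative Steiner realization) Let (X,d) be a proper metric space and S ⊂ X a nonempty compact subset with St(S,X) < ∞, where St(S,X) = inf{H^1(C) : C is a continuum in X and C ∪ S is a continuum}. Then the infimum is attained: there exists a continuum C ⊂ X with C ∪ S a continuum and H^1(C) = St(S,X). -/
open Metric MeasureTheory
open scoped ENNReal NNReal

/-- One-dimensional Hausdorff measure of a subset of a metric space
(with the Borel σ-algebra). -/
noncomputable def H1 (X : Type*) [MetricSpace X] : Set X → ℝ≥0∞ :=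
  letI : MeasurableSpace X := borel X
  haveI : BorelSpace X := ⟨rfl⟩
  fun A => MeasureTheory.Measure.hausdorffMeasure 1 A

/-- Packing number of a subset of a metric space: the supremum of cardinalities
of finite subsets of `A` whose open `ε`-balls are pairwise disjoint. -/
noncomputable def packingNumber {X : Type*} [MetricSpace X] (A : Set X) (ε : ℝ) : ℕ∞ :=
  ⨆ (s : Finset X) (_ : ↑s ⊆ A ∧ (s : Set X).Pairwise
      fun x y => Disjoint (Metric.ball x ε) (Metric.ball y ε)), (s.card : ℕ∞)

/-- Relative Steiner invariant of a subset `S` of a metric space `X`. -/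
noncomputable def relSteiner (X : Type*) [MetricSpace X] (S : Set X) : ℝ≥0∞ :=
  sInf {r : ℝ≥0∞ | ∃ C : Set X, IsCompact C ∧ IsConnected C ∧
    IsCompact (C ∪ S) ∧ IsConnected (C ∪ S) ∧ r = H1 X C}

/-- Absolute Steiner invariant of a compact metric space `S`. -/
noncomputable def absSteiner (S : Type*) [MetricSpace S] : ℝ≥0∞ :=
  sInf {r : ℝ≥0∞ | ∃ (X : Type) (_ : MetricSpace X) (ι : S → X),
    Isometry ι ∧ r = relSteiner X (Set.range ι)}

/-!
The proof is the direct method in the hyperspace of nonempty compact sets. A competitor meets `S`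
and its diameter is at most its length, so the competitors of bounded length lie in a compact
neighbourhood of `S`, whose nonempty compact subsets form a compact hyperspace; being connected is
a closed condition there. What remains is Gołąb's theorem: `H¹` is lower semicontinuous on continua.

To see this, take a cover of a continuum `K` by tiny open sets whose diameters add up to about
`H¹(K)`, and merge its members along a spanning tree of their intersection graph into pieces of
weight about `δ`. A union of intersecting sets has diameter at most the sum of the diameters, so
the total hardly grows, while each piece uses up weight `δ`, so the number of pieces is bounded in
terms of `δ` and `H¹(K)` alone. Hence thickening the pieces by a small enough radius, chosen
before `K`, covers every set close to `K` at almost no cost.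
-/

namespace RelSteiner

open Set Filter Topology TopologicalSpace

section Merging

variable {ι X : Type*} {U : ι → Set X} {s : Finset ι}

/-- The intersection graph of the finite family `(U i)_{i ∈ s}` is connected. Encoded as a way of
building `s` from a singleton by adding one leaf of a spanning tree at a time, which is the
induction principle needed to prune such a tree. -/
inductive NerveConnected (U : ι → Set X) : Finset ι → Prop
  | singleton (i : ι) : NerveConnected U {i}
  | cons {s : Finset ι} {i j : ι} (hs : NerveConnected U s) (hi : i ∉ s) (hj : j ∈ s)
      (hij : (U i ∩ U j).Nonempty) : NerveConnected U (s.cons i hi)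

theorem exists_nerveConnected_subcover [TopologicalSpace X] {K : Set X} (hK : IsConnected K)
    (hU : ∀ i, IsOpen (U i)) (hKU : K ⊆ ⋃ i ∈ s, U i) :
    ∃ t, NerveConnected U t ∧ K ⊆ ⋃ i ∈ t, U i := by
  classical
  obtain ⟨x, hxK⟩ := hK.nonempty
  obtain ⟨i₀, hi₀s, hxi₀⟩ := mem_iUnion₂.1 (hKU hxK)
  have hfin : {t : Finset ι | t ⊆ s ∧ NerveConnected U t}.Finite :=
    s.powerset.finite_toSet.subset fun t ht => Finset.mem_coe.2 (Finset.mem_powerset.2 ht.1)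
  obtain ⟨t, hi₀t, ⟨hts, ht⟩, hmax⟩ := hfin.exists_le_maximal
    (show {i₀} ∈ {t : Finset ι | t ⊆ s ∧ NerveConnected U t} from
      ⟨Finset.singleton_subset_iff.2 hi₀s, .singleton i₀⟩)
  refine ⟨t, ht, ?_⟩
  by_contra hKt
  obtain ⟨y, hyK, hyt⟩ := not_subset.1 hKt
  obtain ⟨k, hks, hyk⟩ := mem_iUnion₂.1 (hKU hyK)
  have hcover : K ⊆ (⋃ i ∈ t, U i) ∪ ⋃ i ∈ s \ t, U i := by
    rwa [← Finset.set_biUnion_union, Finset.union_sdiff_of_subset hts]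
  obtain ⟨z, -, hzt, hzst⟩ := hK.isPreconnected _ _ (isOpen_biUnion fun i _ => hU i)
    (isOpen_biUnion fun i _ => hU i) hcover
    ⟨x, hxK, mem_biUnion (hi₀t (Finset.mem_singleton_self i₀)) hxi₀⟩
    ⟨y, hyK, mem_biUnion (Finset.mem_sdiff.2 ⟨hks, fun hkt => hyt (mem_biUnion hkt hyk)⟩) hyk⟩
  obtain ⟨j, hjt, hzj⟩ := mem_iUnion₂.1 hzt
  obtain ⟨i, hist, hzi⟩ := mem_iUnion₂.1 hzst
  obtain ⟨his, hit⟩ := Finset.mem_sdiff.1 hist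
  have hle : t.cons i hit ≤ t := hmax
    ⟨Finset.cons_subset.2 ⟨his, hts⟩, ht.cons hit hjt ⟨z, hzi, hzj⟩⟩ (Finset.subset_cons hit)
  exact hit (hle (Finset.mem_cons_self i t))

variable [PseudoEMetricSpace X] {m δ : ℝ≥0∞}

/-- `A` is covered by `k + 1` pieces of diameter at most `2 * δ` such that, up to an error `m` for
each piece but one, the weight `W` bounds both the sum of the diameters and `k * δ`. The second
bound is what limits the number of pieces. -/
def HasMergedCover (m δ W : ℝ≥0∞) (A : Set X) : Prop :=
  ∃ (k : ℕ) (P : Fin (k + 1) → Set X), A ⊆ ⋃ l, P l ∧ (∀ l, ediam (P l) ≤ 2 * δ) ∧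
    k * δ ≤ W + k * m ∧ ∑ l, ediam (P l) ≤ W + k * m

theorem HasMergedCover.mono {W W' : ℝ≥0∞} {A A' : Set X} (h : HasMergedCover m δ W A)
    (hA : A' ⊆ A) (hW : W ≤ W') : HasMergedCover m δ W' A' := by
  obtain ⟨k, P, hAP, hPδ, hk, hP⟩ := h
  exact ⟨k, P, hA.trans hAP, hPδ, hk.trans (by gcongr), hP.trans (by gcongr)⟩

theorem hasMergedCover_of_ediam_le {w : ℝ≥0∞} {A : Set X} (hA : ediam A ≤ w) (hw : w ≤ δ) :
    HasMergedCover m δ w A := by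
  refine ⟨0, fun _ => A, by rw [iUnion_const], fun _ => ?_, by simp, by simpa using hA⟩
  exact (hA.trans hw).trans (le_mul_of_one_le_left' one_le_two)

theorem HasMergedCover.union {w W : ℝ≥0∞} {A B : Set X} (hA : HasMergedCover m δ (m + W) A)
    (hB : ediam B ≤ w) (hδw : δ ≤ w) (hwδ : w ≤ 2 * δ) : HasMergedCover m δ (w + W) (B ∪ A) := by
  obtain ⟨k, P, hAP, hPδ, hk, hP⟩ := hA
  have hweight : w + (m + W + k * m) = w + W + (k + 1 : ℕ) * m := by push_cast; ring
  refine ⟨k + 1, Fin.cons B P, ?_, Fin.forall_fin_succ.2 ⟨hB.trans hwδ, hPδ⟩, ?_, ?_⟩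
  · rintro x (hxB | hxA)
    · exact mem_iUnion.2 ⟨0, hxB⟩
    · obtain ⟨l, hl⟩ := mem_iUnion.1 (hAP hxA)
      exact mem_iUnion.2 ⟨l.succ, hl⟩
  · calc ((k + 1 : ℕ) : ℝ≥0∞) * δ = δ + k * δ := by push_cast; ring
      _ ≤ w + (m + W + k * m) := add_le_add hδw hk
      _ = w + W + (k + 1 : ℕ) * m := hweight
  · rw [Fin.sum_univ_succ, ← hweight]
    exact add_le_add hB hP

/- Prune the leaves `i` of a spanning tree one by one, letting the blob `E i` be absorbed by the
blob of its neighbour `j`. Once the joint weight exceeds `δ`, the union is put aside as a finished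
piece and the blob of `j` restarts from `U j`, which wastes weight at most `m`. -/
theorem NerveConnected.hasMergedCover_biUnion (hs : NerveConnected U s) (hmδ : m ≤ δ)
    (hUm : ∀ i, ediam (U i) ≤ m) {E : ι → Set X} {a : ι → ℝ≥0∞} (hUE : ∀ i, U i ⊆ E i)
    (hEa : ∀ i, ediam (E i) ≤ a i) (haδ : ∀ i, a i ≤ δ) :
    HasMergedCover m δ (∑ i ∈ s, a i) (⋃ i ∈ s, E i) := by
  classical
  induction hs generalizing E a with
  | singleton i => simpa using hasMergedCover_of_ediam_le (hEa i) (haδ i)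
  | @cons s i j _ hi hj hij ih =>
    have hEij : ediam (E i ∪ E j) ≤ a i + a j :=
      (ediam_union_le (hij.mono (inter_subset_inter (hUE i) (hUE j)))).trans
        (add_le_add (hEa i) (hEa j))
    have hsum : ∑ l ∈ s.cons i hi, a l = a i + a j + ∑ l ∈ s \ {j}, a l := by
      rw [Finset.sum_cons, add_assoc, ← Finset.sum_update_of_mem hj, Function.update_eq_self]
    have hunion (B : Set X) :
        ⋃ l ∈ s.cons i hi, E l ⊆ (E i ∪ E j) ∪ ⋃ l ∈ s, Function.update E j B l := by
      intro x hx
      simp only [Finset.mem_cons, mem_iUnion, mem_union] at hx ⊢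
      grind
    rw [hsum]
    rcases le_or_gt (a i + a j) δ with hle | hlt
    · have hrest := ih (E := Function.update E j (E i ∪ E j))
        (a := Function.update a j (a i + a j)) (by grind) (by grind) (by grind)
      rw [Finset.sum_update_of_mem hj] at hrest
      refine hrest.mono ((hunion (E i ∪ E j)).trans (union_subset ?_ Subset.rfl)) le_rfl
      exact (Function.update_self j _ E).superset.trans (subset_biUnion_of_mem hj)
    · have hrest := ih (E := Function.update E j (U j))
        (a := Function.update a j m) (by grind) (by grind) (by grind)
      rw [Finset.sum_update_of_mem hj] at hrest
      exact (hrest.union hEij hlt.le (two_mul δ ▸ add_le_add (haδ i) (haδ j))).mono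
        (hunion (U j)) le_rfl

end Merging

section HausdorffMeasure

variable {X : Type*} [EMetricSpace X] [MeasurableSpace X] [BorelSpace X]

open Measure

theorem exists_cover_of_hausdorffMeasure_lt {d : ℝ} (hd : 0 < d) {K : Set X} {L m : ℝ≥0∞}
    (hK : μH[d] K < L) (hm : 0 < m) :
    ∃ t : ℕ → Set X, K ⊆ ⋃ n, t n ∧ (∀ n, ediam (t n) ≤ m) ∧ ∑' n, ediam (t n) ^ d < L := by
  rw [hausdorffMeasure_apply] at hK
  have hinf := (le_iSup₂ (f := fun (r : ℝ≥0∞) (_ : 0 < r) =>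
    ⨅ (t : ℕ → Set X) (_ : K ⊆ ⋃ n, t n) (_ : ∀ n, ediam (t n) ≤ r),
      ∑' n, ⨆ _ : (t n).Nonempty, ediam (t n) ^ d) m hm).trans_lt hK
  simp only [iInf_lt_iff] at hinf
  obtain ⟨t, hKt, htm, htL⟩ := hinf
  refine ⟨t, hKt, htm, (ENNReal.tsum_le_tsum fun n => ?_).trans_lt htL⟩
  obtain hn | hn := (t n).eq_empty_or_nonempty
  · simp [hn, hd]
  · simp [hn]

theorem exists_isOpen_cover_of_hausdorffMeasure_one_lt {K : Set X} {L m : ℝ≥0∞}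
    (hK : μH[1] K < L) (hm : 0 < m) :
    ∃ U : ℕ → Set X, (∀ n, IsOpen (U n)) ∧ K ⊆ ⋃ n, U n ∧ (∀ n, ediam (U n) ≤ m) ∧
      ∑' n, ediam (U n) ≤ L := by
  obtain ⟨t, hKt, htm, htL⟩ :=
    exists_cover_of_hausdorffMeasure_lt one_pos hK (ENNReal.half_pos hm.ne')
  simp only [ENNReal.rpow_one] at htL
  obtain ⟨ε, hε0, hε⟩ := ENNReal.exists_pos_tsum_mul_lt_of_countable
    (lt_min (ENNReal.half_pos hm.ne') (tsub_pos_of_lt htL)).ne' (fun _ : ℕ => 2) (by simp)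
  obtain ⟨hεm, hεL⟩ := le_min_iff.1 hε.le
  refine ⟨fun n => thickening (ε n) (t n), fun n => isOpen_thickening,
    hKt.trans (iUnion_mono fun n => self_subset_thickening (hε0 n) _), fun n => ?_, ?_⟩
  · calc ediam (thickening (ε n) (t n)) ≤ ediam (t n) + 2 * ε n := ediam_thickening_le _
      _ ≤ m / 2 + m / 2 := add_le_add (htm n) ((ENNReal.le_tsum n).trans hεm)
      _ = m := ENNReal.add_halves m
  · calc ∑' n, ediam (thickening (ε n) (t n)) ≤ ∑' n, (ediam (t n) + 2 * ε n) :=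
          ENNReal.tsum_le_tsum fun n => ediam_thickening_le _
      _ = ∑' n, ediam (t n) + ∑' n, 2 * (ε n : ℝ≥0∞) := ENNReal.tsum_add
      _ ≤ ∑' n, ediam (t n) + (L - ∑' n, ediam (t n)) := by gcongr
      _ = L := add_tsub_cancel_of_le htL.le

theorem hasMergedCover_of_isConnected {K : Set X} (hK : IsCompact K) (hKc : IsConnected K)
    {L m δ : ℝ≥0∞} (hKL : μH[1] K < L) (hm : 0 < m) (hmδ : m ≤ δ) : HasMergedCover m δ L K := by
  obtain ⟨U, hUo, hKU, hUm, hUL⟩ := exists_isOpen_cover_of_hausdorffMeasure_one_lt hKL hm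
  obtain ⟨s, hKs⟩ := hK.elim_finite_subcover U hUo hKU
  obtain ⟨t, ht, hKt⟩ := exists_nerveConnected_subcover hKc hUo hKs
  exact (ht.hasMergedCover_biUnion hmδ hUm (fun _ => Subset.rfl) (fun _ => le_rfl)
    fun i => (hUm i).trans hmδ).mono hKt ((ENNReal.sum_le_tsum t).trans hUL)

theorem exists_bound_card_fin_cover_of_isConnected (L : ℝ≥0) {ε : ℝ≥0} (hε : 0 < ε) :
    ∃ N : ℕ, ∀ K : Set X, IsCompact K → IsConnected K → μH[1] K ≤ L →
      ∃ k ≤ N, ∃ P : Fin k → Set X, K ⊆ ⋃ l, P l ∧ (∀ l, ediam (P l) ≤ ε) ∧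
        ∑ l, ediam (P l) ≤ L + ε := by
  obtain ⟨N, hN⟩ := exists_nat_gt ((L + ε / 2) / (ε / 4))
  set m : ℝ≥0 := min (ε / 4) (ε / 2 / (N + 1))
  have hm0 : 0 < m := by positivity
  refine ⟨N + 1, fun K hK hKc hKL => ?_⟩
  have hKL' : μH[1] K < (L + ε / 2 : ℝ≥0) :=
    hKL.trans_lt (by exact_mod_cast lt_add_of_pos_right L (half_pos hε))
  obtain ⟨k, P, hKP, hPε, hk, hP⟩ := hasMergedCover_of_isConnected hK hKc hKL'
    (m := m) (δ := (ε / 2 : ℝ≥0)) (by exact_mod_cast hm0)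
    (by exact_mod_cast (min_le_left _ _).trans (by gcongr; norm_num))
  norm_cast at hk
  have hkN : k < N := by
    have hkε : k * (ε / 4) + k * (ε / 4) ≤ L + ε / 2 + k * (ε / 4) :=
      calc k * (ε / 4) + k * (ε / 4) = k * (ε / 2) := by ring
        _ ≤ L + ε / 2 + k * m := hk
        _ ≤ L + ε / 2 + k * (ε / 4) := by gcongr; exact min_le_left _ _
    exact_mod_cast ((le_div_iff₀ (by positivity)).2 (le_of_add_le_add_right hkε)).trans_lt hN
  have hkm : k * m ≤ ε / 2 :=
    calc k * m ≤ (N + 1) * (ε / 2 / (N + 1)) := by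
          gcongr
          · exact_mod_cast hkN.le.trans N.le_succ
          · exact min_le_right _ _
      _ = ε / 2 := mul_div_cancel₀ _ (by positivity)
  refine ⟨k + 1, by lia, P, hKP, fun l => (hPε l).trans_eq ?_, hP.trans ?_⟩
  · exact_mod_cast mul_div_cancel₀ ε two_ne_zero
  · norm_cast
    calc L + ε / 2 + k * m ≤ L + ε / 2 + ε / 2 := by gcongr
      _ = L + ε := by rw [add_assoc, add_halves]

theorem hausdorffMeasure_le_of_forall_exists_fin_cover {d : ℝ} {s : Set X} {L : ℝ≥0∞}
    (h : ∀ ε : ℝ≥0, 0 < ε → ∃ (k : ℕ) (P : Fin k → Set X), s ⊆ ⋃ l, P l ∧ (∀ l, ediam (P l) ≤ ε) ∧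
      ∑ l, ediam (P l) ^ d ≤ L + ε) :
    μH[d] s ≤ L := by
  obtain ⟨ε, -, hε0, hε⟩ := exists_seq_strictAnti_tendsto (0 : ℝ≥0)
  have hε' : Tendsto (fun n => (ε n : ℝ≥0∞)) atTop (𝓝 0) := ENNReal.tendsto_coe.2 hε
  choose k P hsP hPε hPL using fun n => h (ε n) (hε0 n)
  calc μH[d] s ≤ liminf (fun n => ∑ l, ediam (P n l) ^ d) atTop :=
        hausdorffMeasure_le_liminf_sum d s _ hε' P (.of_forall hPε) (.of_forall hsP)
    _ ≤ liminf (fun n => L + (ε n : ℝ≥0∞)) atTop := liminf_le_liminf (.of_forall hPL)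
    _ = L := by simpa using (tendsto_const_nhds.add hε').liminf_eq

theorem hausdorffMeasure_one_le_of_forall_subset_thickening {C : Set X} {L : ℝ≥0∞}
    (h : ∀ η : ℝ, 0 < η → ∃ K, IsCompact K ∧ IsConnected K ∧ μH[1] K ≤ L ∧ C ⊆ thickening η K) :
    μH[1] C ≤ L := by
  obtain rfl | hL := eq_or_ne L ⊤
  · exact le_top
  lift L to ℝ≥0 using hL
  refine hausdorffMeasure_le_of_forall_exists_fin_cover fun ε hε => ?_
  obtain ⟨N, hN⟩ := exists_bound_card_fin_cover_of_isConnected (X := X) L (half_pos hε)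
  set η : ℝ≥0 := ε / 4 / (N + 1)
  have hNη : (N + 1) * (2 * η) = ε / 2 := by simp only [η]; field_simp; norm_num
  obtain ⟨K, hK, hKc, hKL, hCK⟩ := h η (by positivity)
  obtain ⟨k, hkN, P, hKP, hPε, hPL⟩ := hN K hK hKc hKL
  refine ⟨k, fun l => thickening η (P l), ?_, fun l => ?_, ?_⟩
  · rw [← thickening_iUnion]
    exact hCK.trans (thickening_subset_of_subset _ hKP)
  · calc ediam (thickening η (P l)) ≤ ediam (P l) + 2 * η := ediam_thickening_le _
      _ ≤ (ε / 2 : ℝ≥0) + ((N + 1) * (2 * η) : ℝ≥0) := by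
          gcongr
          · exact hPε l
          · exact_mod_cast le_mul_of_one_le_left' (by simp)
      _ = ε := by rw [hNη]; exact_mod_cast add_halves ε
  · simp only [ENNReal.rpow_one]
    calc ∑ l, ediam (thickening η (P l)) ≤ ∑ l, (ediam (P l) + 2 * η) :=
          Finset.sum_le_sum fun l _ => ediam_thickening_le _
      _ = ∑ l, ediam (P l) + k * (2 * η) := by simp [Finset.sum_add_distrib]
      _ ≤ (L + (ε / 2 : ℝ≥0)) + ((N + 1) * (2 * η) : ℝ≥0) := by
          gcongr
          push_cast
          gcongr
          exact_mod_cast hkN.trans N.le_succ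
      _ = L + ε := by rw [hNη, add_assoc]; exact_mod_cast congrArg (L + ·) (add_halves ε)

end HausdorffMeasure
section Hyperspace

theorem isClosed_setOfPred_isPreconnected {X : Type*} [TopologicalSpace X] [T2Space X] :
    IsClosed {C : NonemptyCompacts X | IsPreconnected (C : Set X)} := by
  rw [← isOpen_compl_iff, isOpen_iff_mem_nhds]
  intro C hC
  simp only [mem_compl_iff, mem_ofPred_eq,
    isPreconnected_iff_subset_of_fully_disjoint_closed C.isCompact.isClosed] at hC
  push Not at hC
  obtain ⟨F, G, hF, hG, hCFG, hFG, hCF, hCG⟩ := hC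
  obtain ⟨V, W, hV, hW, hFV, hGW, hVW⟩ := SeparatedNhds.of_isCompact_isCompact
    (C.isCompact.inter_right hF) (C.isCompact.inter_right hG)
    (hFG.mono inter_subset_right inter_subset_right)
  have hCVW : (C : Set X) ⊆ V ∪ W := by grind
  have hCV : ((C : Set X) ∩ V).Nonempty := by
    obtain ⟨x, hxC, hxG⟩ := not_subset.1 hCG
    exact ⟨x, hxC, hFV ⟨hxC, (hCFG hxC).resolve_right hxG⟩⟩
  have hCW : ((C : Set X) ∩ W).Nonempty := by
    obtain ⟨x, hxC, hxF⟩ := not_subset.1 hCF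
    exact ⟨x, hxC, hGW ⟨hxC, (hCFG hxC).resolve_left hxF⟩⟩
  filter_upwards [(NonemptyCompacts.isOpen_subsets_of_isOpen (hV.union hW)).mem_nhds hCVW,
    (NonemptyCompacts.isOpen_inter_nonempty_of_isOpen hV).mem_nhds hCV,
    (NonemptyCompacts.isOpen_inter_nonempty_of_isOpen hW).mem_nhds hCW] with D hDVW hDV hDW hD
  obtain ⟨x, -, hxVW⟩ := hD V W hV hW hDVW hDV hDW
  exact hVW.notMem_of_mem_left hxVW.1 hxVW.2

theorem lowerSemicontinuousOn_hausdorffMeasure_one {X : Type*} [EMetricSpace X]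
    [MeasurableSpace X] [BorelSpace X] :
    LowerSemicontinuousOn (fun C : NonemptyCompacts X => μH[1] (C : Set X))
      {C | IsPreconnected (C : Set X)} := by
  intro C _ L hL
  by_contra hfreq
  simp only [not_eventually, not_lt] at hfreq
  refine hL.not_ge (hausdorffMeasure_one_le_of_forall_subset_thickening fun η hη => ?_)
  have hη' : 0 < ENNReal.ofReal η := ENNReal.ofReal_pos.2 hη
  obtain ⟨K, hKL, hK, hKC⟩ := (hfreq.and_eventually (eventually_mem_nhdsWithin.and
    (mem_nhdsWithin_of_mem_nhds (Metric.eball_mem_nhds C hη')))).exists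
  refine ⟨K, K.isCompact, ⟨K.nonempty, hK⟩, hKL, fun x hx => ?_⟩
  rw [mem_thickening_iff_exists_edist_lt]
  exact exists_edist_lt_of_hausdorffEDist_lt hx (mem_eball'.1 hKC)

variable {X : Type*} [MetricSpace X] [MeasurableSpace X] [BorelSpace X]

theorem ediam_le_hausdorffMeasure_one {C : Set X} (hC : IsPreconnected C) :
    ediam C ≤ μH[1] C := by
  refine ediam_le fun x hx y hy => ?_
  have hIcc : Icc 0 (dist y x) ⊆ (dist · x) '' C := by
    simpa using (hC.image (dist · x) (by fun_prop)).Icc_subset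
      (mem_image_of_mem _ hx) (mem_image_of_mem _ hy)
  calc edist x y = volume (Icc 0 (dist y x)) := by simp [edist_dist, dist_comm]
    _ ≤ μH[1] ((dist · x) '' C) := by
        rw [hausdorffMeasure_real]
        exact measure_mono hIcc
    _ ≤ μH[1] C := by
        simpa using (LipschitzWith.dist_left x).lipschitzOnWith.hausdorffMeasure_image_le
          (s := C) zero_le_one

theorem exists_isMinOn_hausdorffMeasure_one [ProperSpace X] {S : Set X} (hS : IsCompact S)
    {𝒦 : Set (NonemptyCompacts X)} (h𝒦 : IsClosed 𝒦) (hne : 𝒦.Nonempty)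
    (hconn : ∀ C ∈ 𝒦, IsPreconnected (C : Set X)) (hmeet : ∀ C ∈ 𝒦, ((C : Set X) ∩ S).Nonempty) :
    ∃ C ∈ 𝒦, IsMinOn (fun C : NonemptyCompacts X => μH[1] (C : Set X)) 𝒦 C := by
  by_cases htop : ∀ C ∈ 𝒦, μH[1] (C : Set X) = ⊤
  · obtain ⟨C, hC⟩ := hne
    exact ⟨C, hC, fun D hD => by simp [htop D hD]⟩
  push Not at htop
  obtain ⟨C₀, hC₀, hfin⟩ := htop
  set B := cthickening (μH[1] (C₀ : Set X)).toReal S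
  have hB : ∀ C ∈ 𝒦, μH[1] (C : Set X) ≤ μH[1] (C₀ : Set X) → (C : Set X) ⊆ B := by
    intro C hC hCC₀ x hx
    obtain ⟨y, hyC, hyS⟩ := hmeet C hC
    refine mem_cthickening_of_edist_le x y _ S hyS ?_
    rw [ENNReal.ofReal_toReal hfin]
    exact (edist_le_ediam_of_mem hx hyC).trans
      ((ediam_le_hausdorffMeasure_one (hconn C hC)).trans hCC₀)
  have hcompact : IsCompact ({C : NonemptyCompacts X | (C : Set X) ⊆ B} ∩ 𝒦) :=
    (NonemptyCompacts.isCompact_subsets_of_isCompact hS.cthickening).inter_right h𝒦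
  have hC₀' : C₀ ∈ {C : NonemptyCompacts X | (C : Set X) ⊆ B} ∩ 𝒦 := ⟨hB C₀ hC₀ le_rfl, hC₀⟩
  have hlsc : LowerSemicontinuousOn (fun C : NonemptyCompacts X => μH[1] (C : Set X)) 𝒦 :=
    lowerSemicontinuousOn_hausdorffMeasure_one.mono hconn
  obtain ⟨C, ⟨-, hC⟩, hmin⟩ := (hlsc.mono inter_subset_right).exists_isMinOn
    ⟨C₀, hC₀'⟩ hcompact
  refine ⟨C, hC, fun D hD => ?_⟩
  obtain hle | hlt := le_or_gt (μH[1] (D : Set X)) (μH[1] (C₀ : Set X))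
  · exact hmin ⟨hB D hD hle, hD⟩
  · exact (hmin hC₀').trans hlt.le

end Hyperspace

section Steiner

/-- The competitors in the definition of `relSteiner X S`, as points of the hyperspace of nonempty
compact sets. The compactness of `C ∪ S` is left out, as it is automatic for compact `S`. -/
def steinerContinua {X : Type*} [TopologicalSpace X] (S : Set X) : Set (NonemptyCompacts X) :=
  {C | IsPreconnected (C : Set X) ∧ IsPreconnected (C ∪ S : Set X)}

theorem isClosed_steinerContinua {X : Type*} [TopologicalSpace X] [T2Space X] {S : Set X}
    (hS : IsCompact S) (hne : S.Nonempty) : IsClosed (steinerContinua S) := by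
  have hsup : Continuous fun C : NonemptyCompacts X => C ⊔ ⟨⟨S, hS⟩, hne⟩ := by fun_prop
  exact isClosed_setOfPred_isPreconnected.inter
    (isClosed_setOfPred_isPreconnected.preimage hsup)

theorem inter_nonempty_of_mem_steinerContinua {X : Type*} [TopologicalSpace X] [T2Space X]
    {S : Set X} (hS : IsClosed S) (hne : S.Nonempty) {C : NonemptyCompacts X}
    (hC : C ∈ steinerContinua S) : ((C : Set X) ∩ S).Nonempty :=
  (isPreconnected_closed_iff.1 hC.2 C S C.isCompact.isClosed hS Subset.rfl
    (C.nonempty.mono (by simp)) (hne.mono (by simp))).mono inter_subset_right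

variable {X : Type*} [MetricSpace X] [MeasurableSpace X] [BorelSpace X]

theorem H1_eq_hausdorffMeasure (A : Set X) : H1 X A = μH[1] A := by
  obtain rfl := BorelSpace.measurable_eq (α := X)
  rfl

theorem relSteiner_eq_iInf {S : Set X} (hS : IsCompact S) :
    relSteiner X S = ⨅ C ∈ steinerContinua S, μH[1] (C : Set X) := by
  refine le_antisymm (le_iInf₂ fun C hC => sInf_le ?_) (le_sInf ?_)
  · exact ⟨C, C.isCompact, ⟨C.nonempty, hC.1⟩, C.isCompact.union hS, ⟨C.nonempty.inl, hC.2⟩,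
      (H1_eq_hausdorffMeasure _).symm⟩
  · rintro _ ⟨C, hC, hCc, -, hCS, rfl⟩
    rw [H1_eq_hausdorffMeasure]
    exact iInf₂_le (⟨⟨C, hC⟩, hCc.nonempty⟩ : NonemptyCompacts X)
      ⟨hCc.isPreconnected, hCS.isPreconnected⟩

end Steiner

end RelSteiner

/-- **Relative Steiner realization.** Let `X` be a proper metric space and `S ⊆ X` a
nonempty compact subset with `St(S,X) < ∞`. Then the infimum is attained: there is a
continuum `C ⊆ X` with `C ∪ S` a continuum and `H¹(C) = St(S,X)`. -/
theorem relSteiner_realized (X : Type*) [MetricSpace X] [ProperSpace X]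
    (S : Set X) (hS : IsCompact S) (hne : S.Nonempty)
    (hfin : relSteiner X S < ⊤) :
    ∃ C : Set X, IsCompact C ∧ IsConnected C ∧
      IsCompact (C ∪ S) ∧ IsConnected (C ∪ S) ∧ H1 X C = relSteiner X S := by
  borelize X
  have hcomp : (RelSteiner.steinerContinua S).Nonempty := by
    by_contra! hempty
    simp [RelSteiner.relSteiner_eq_iInf hS, hempty] at hfin
  obtain ⟨C, hC, hmin⟩ := RelSteiner.exists_isMinOn_hausdorffMeasure_one hS
    (RelSteiner.isClosed_steinerContinua hS hne) hcomp (fun C hC => hC.1)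
    (fun C hC => RelSteiner.inter_nonempty_of_mem_steinerContinua hS.isClosed hne hC)
  refine ⟨C, C.isCompact, ⟨C.nonempty, hC.1⟩, C.isCompact.union hS, ⟨C.nonempty.inl, hC.2⟩, ?_⟩
  rw [RelSteiner.H1_eq_hausdorffMeasure, RelSteiner.relSteiner_eq_iInf hS]
  exact (le_iInf₂ fun D hD => hmin hD).antisymm (iInf₂_le C hC)
end

section
/- (Main theorem) Let S be a compact metric space with finite absolute Steiner invariant St(S) < ∞. Then St(S) is realized: there exist a compact metric space Z, an isometric embedding ι : S → Z, and a continuum C ⊂ Z such that C ∪ ι(S) is a continuum and H^1(C) = St(S) = St(ι(S), Z). -/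
open Metric MeasureTheory
open scoped ENNReal NNReal

/-!
Let `C` be a continuum of finite length. It is exhausted greedily: at each step a shortest curve
inside `C` is drawn from the part `T` already built to the point of `C` farthest from `T`. A
shortest curve is injective and meets `T` only at its start, so its length is the Hausdorff measure
it adds. Hence the lengths sum to at most `H¹(C)`, and after `k + 1` steps every point of `C` is
within `H¹(C) / (k + 1)` of the curves. For a minimizing sequence of continua joining `S`, the
distances between the points of `S` and of the curves therefore have an ultralimit, in a compact
space, where the limit curves are still connected, still reach `S`, and have total length at most
`St(S)`. Taking the closure of their union adds no length: around a point of the closure, a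
connected set has at least as much length as the radius, so the part of the closure outside the
union is null.
-/

section HausdorffMeasure

open Set Filter Topology

variable {X : Type*} [MetricSpace X] [MeasurableSpace X] [BorelSpace X]

theorem ofReal_le_hausdorffMeasure_inter_ball {U : Set X} (hU : IsPreconnected U) {x y : X}
    (hx : x ∈ closure U) (hy : y ∈ U) {r : ℝ} (hr : r ≤ dist y x) :
    ENNReal.ofReal r ≤ μH[1] (U ∩ ball x r) := by
  have hdist : LipschitzWith 1 fun z => dist z x := LipschitzWith.dist_left x
  have hord : OrdConnected ((fun z => dist z x) '' U) :=
    (hU.image _ hdist.continuous.continuousOn).ordConnected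
  have hsub : Ioo 0 r ⊆ (fun z => dist z x) '' (U ∩ ball x r) := by
    intro t ht
    obtain ⟨z, hzU, hzt⟩ := Metric.mem_closure_iff.1 hx t ht.1
    rw [dist_comm] at hzt
    obtain ⟨w, hwU, hwt⟩ := hord.out (mem_image_of_mem _ hzU) (mem_image_of_mem _ hy)
      ⟨hzt.le, ht.2.le.trans hr⟩
    exact ⟨w, ⟨hwU, mem_ball.2 (hwt.trans_lt ht.2)⟩, hwt⟩
  calc ENNReal.ofReal r = μH[1] (Ioo 0 r) := by simp [hausdorffMeasure_real]
    _ ≤ μH[1] ((fun z => dist z x) '' (U ∩ ball x r)) := measure_mono hsub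
    _ ≤ μH[1] (U ∩ ball x r) := by
      simpa using hdist.hausdorffMeasure_image_le zero_le_one (U ∩ ball x r)

theorem edist_le_hausdorffMeasure {U : Set X} (hU : IsPreconnected U) {x y : X} (hx : x ∈ U)
    (hy : y ∈ U) : edist x y ≤ μH[1] U := by
  rw [edist_comm, edist_dist]
  exact (ofReal_le_hausdorffMeasure_inter_ball hU (subset_closure hx) hy le_rfl).trans
    (measure_mono inter_subset_left)

theorem exists_countable_closedBall_cover {d : ℝ} {ν : Measure X} [IsFiniteMeasure ν] {E : Set X}
    (h : ∀ x ∈ E, ∃ᶠ ρ in 𝓝[>] 0, ENNReal.ofReal ρ ^ d ≤ ν (closedBall x ρ))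
    {δ : ℝ} (hδ : 0 < δ) :
    ∃ (u : Set X) (ρ : X → ℝ), u.Countable ∧ (∀ x ∈ u, 0 < ρ x ∧ ρ x < δ) ∧
      E ⊆ ⋃ x : u, closedBall ↑x (5 * ρ x) ∧ ∑' x : u, ENNReal.ofReal (ρ x) ^ d ≤ ν univ := by
  have hρ : ∀ x, ∃ ρ, x ∈ E → (ENNReal.ofReal ρ ^ d ≤ ν (closedBall x ρ)) ∧ 0 < ρ ∧ ρ < δ := by
    intro x
    by_cases hx : x ∈ E
    · obtain ⟨ρ, hρ⟩ := ((h x hx).and_eventually (Ioo_mem_nhdsGT hδ)).exists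
      exact ⟨ρ, fun _ => hρ⟩
    · exact ⟨0, fun hx' => absurd hx' hx⟩
  choose ρ hρ using hρ
  obtain ⟨u, huE, hdisj, hcov⟩ := Vitali.exists_disjoint_subfamily_covering_enlargement_closedBall
    E id ρ δ (fun x hx => (hρ x hx).2.2.le) 5 (by norm_num)
  have hmeas (x : u) : MeasurableSet (closedBall (x : X) (ρ x)) := measurableSet_closedBall
  have hpair : Pairwise (Function.onFun Disjoint fun x : u => closedBall (x : X) (ρ x)) :=
    fun x y hxy => hdisj x.2 y.2 (Subtype.coe_injective.ne hxy)
  have hcount : {x : u | 0 < ν (closedBall (x : X) (ρ x))}.Countable :=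
    Measure.countable_meas_pos_of_disjoint_of_meas_iUnion_ne_top ν hmeas hpair (measure_ne_top _ _)
  have hpos : ∀ x : u, 0 < ν (closedBall (x : X) (ρ x)) := fun x =>
    (ENNReal.rpow_pos (ENNReal.ofReal_pos.2 (hρ x (huE x.2)).2.1) ENNReal.ofReal_ne_top).trans_le
      (hρ x (huE x.2)).1
  refine ⟨u, ρ, ?_, fun x hx => (hρ x (huE hx)).2, fun x hx => ?_, ?_⟩
  · exact countable_coe_iff.1 (countable_univ_iff.1 (hcount.mono fun x _ => hpos x))
  · obtain ⟨y, hy, hxy⟩ := hcov x hx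
    exact mem_iUnion.2 ⟨⟨y, hy⟩, hxy (mem_closedBall_self (hρ x hx).2.1.le)⟩
  · calc ∑' x : u, ENNReal.ofReal (ρ x) ^ d
        ≤ ∑' x : u, ν (closedBall (x : X) (ρ x)) :=
          ENNReal.tsum_le_tsum fun x => (hρ x (huE x.2)).1
      _ ≤ ν (⋃ x : u, closedBall (x : X) (ρ x)) :=
          tsum_meas_le_meas_iUnion_of_disjoint ν hmeas hpair
      _ ≤ ν univ := measure_mono (subset_univ _)

theorem hausdorffMeasure_le_measure_univ_of_frequently_le_closedBall {d : ℝ} (hd : 0 ≤ d)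
    {ν : Measure X} [IsFiniteMeasure ν] {E : Set X}
    (h : ∀ x ∈ E, ∃ᶠ ρ in 𝓝[>] 0, ENNReal.ofReal ρ ^ d ≤ ν (closedBall x ρ)) :
    μH[d] E ≤ 10 ^ d * ν univ := by
  choose u ρ hcount hρ hcov hsum using fun n : ℕ =>
    exists_countable_closedBall_cover h (Nat.one_div_pos_of_nat (α := ℝ) (n := n))
  have (n : ℕ) : Countable (u n) := (hcount n).to_subtype
  have hdiam : ∀ n (x : u n),
      ediam (closedBall (x : X) (5 * ρ n x)) ≤ 10 * ENNReal.ofReal (ρ n x) := by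
    intro n x
    refine ediam_le fun a ha b hb => ?_
    rw [edist_dist, ← ENNReal.ofReal_ofNat, ← ENNReal.ofReal_mul (by norm_num)]
    refine ENNReal.ofReal_le_ofReal ((dist_triangle_right a b x).trans ?_)
    linarith [mem_closedBall.1 ha, mem_closedBall.1 hb]
  have hlim : Tendsto (fun n : ℕ => 10 * ENNReal.ofReal (1 / ((n : ℝ) + 1))) atTop (𝓝 0) := by
    simpa using ENNReal.Tendsto.const_mul (a := 10)
      (ENNReal.tendsto_ofReal tendsto_one_div_add_atTop_nhds_zero_nat) (Or.inr (by norm_num))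
  refine (Measure.hausdorffMeasure_le_liminf_tsum d E _ hlim
    (fun n (x : u n) => closedBall (x : X) (5 * ρ n x))
    (.of_forall fun n x => (hdiam n x).trans ?_) (.of_forall hcov)).trans
    (liminf_le_of_le (by isBoundedDefault) fun b hb => ?_)
  · gcongr
    exact (hρ n x x.2).2.le
  · obtain ⟨n, hn⟩ := hb.exists
    calc b ≤ ∑' x : u n, ediam (closedBall (x : X) (5 * ρ n x)) ^ d := hn
      _ ≤ ∑' x : u n, 10 ^ d * ENNReal.ofReal (ρ n x) ^ d := by
        refine ENNReal.tsum_le_tsum fun x => ?_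
        rw [← ENNReal.mul_rpow_of_nonneg _ _ hd]
        exact ENNReal.rpow_le_rpow (hdiam n x) hd
      _ ≤ 10 ^ d * ν univ := by
        rw [ENNReal.tsum_mul_left]
        gcongr
        exact hsum n

theorem hausdorffMeasure_le_of_frequently_le_closedBall {d : ℝ} (hd : 0 ≤ d)
    {ν : Measure X} [IsFiniteMeasure ν] {E : Set X}
    (h : ∀ x ∈ E, ∃ᶠ ρ in 𝓝[>] 0, ENNReal.ofReal ρ ^ d ≤ ν (closedBall x ρ)) :
    μH[d] E ≤ 10 ^ d * ν E := by
  have hV : ∀ V, E ⊆ V → IsOpen V → μH[d] E ≤ 10 ^ d * ν V := by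
    intro V hEV hV
    rw [← Measure.restrict_apply_univ V]
    refine hausdorffMeasure_le_measure_univ_of_frequently_le_closedBall hd fun x hx => ?_
    obtain ⟨ε, hε, hball⟩ := Metric.isOpen_iff.1 hV x (hEV hx)
    refine ((h x hx).and_eventually (Ioo_mem_nhdsGT hε)).mono fun ρ hρ => ?_
    rw [Measure.restrict_eq_self ν ((closedBall_subset_ball hρ.2.2).trans hball)]
    exact hρ.1
  have h10 : (10 : ℝ≥0∞) ^ d ≠ ⊤ := ENNReal.rpow_ne_top_of_nonneg hd (by norm_num)
  have h0 : (10 : ℝ≥0∞) ^ d ≠ 0 := by simp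
  simpa only [E.measure_eq_iInf_isOpen ν, ENNReal.mul_iInf_of_ne h0 h10, le_iInf_iff] using hV

theorem hausdorffMeasure_closure_sdiff_eq_zero {U : Set X} (hU : IsPreconnected U)
    (hUm : MeasurableSet U) (hfin : μH[1] U ≠ ⊤) : μH[1] (closure U \ U) = 0 := by
  have : IsFiniteMeasure (μH[1].restrict U) := ⟨by simpa using hfin.lt_top⟩
  refine le_antisymm ((hausdorffMeasure_le_of_frequently_le_closedBall (ν := μH[1].restrict U)
    zero_le_one fun x hx => ?_).trans ?_) zero_le
  · obtain ⟨y, hy⟩ := closure_nonempty_iff.1 ⟨x, hx.1⟩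
    have hyx : 0 < dist y x := dist_pos.2 fun h => hx.2 (h ▸ hy)
    refine (eventually_of_mem (Ioo_mem_nhdsGT hyx) fun ρ hρ => ?_).frequently
    rw [ENNReal.rpow_one, Measure.restrict_apply measurableSet_closedBall, inter_comm]
    exact (ofReal_le_hausdorffMeasure_inter_ball hU hx.1 hy hρ.2.le).trans
      (measure_mono (inter_subset_inter_right _ ball_subset_closedBall))
  · rw [Measure.restrict_apply' hUm, sdiff_inter_self, measure_empty, mul_zero]

theorem hausdorffMeasure_closure_eq {U : Set X} (hU : IsPreconnected U) (hUm : MeasurableSet U)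
    (hfin : μH[1] U ≠ ⊤) : μH[1] (closure U) = μH[1] U := by
  refine le_antisymm ?_ (measure_mono subset_closure)
  calc μH[1] (closure U) ≤ μH[1] (closure U ∩ U) + μH[1] (closure U \ U) :=
        measure_le_inter_add_sdiff _ _ _
    _ ≤ μH[1] U := by
        rw [hausdorffMeasure_closure_sdiff_eq_zero hU hUm hfin, add_zero]
        exact measure_mono inter_subset_right

end HausdorffMeasure

section ProximityGraph

open Set Filter Topology

/-- The graph on `X` joining distinct points at distance less than `ε`; its walks are the
`ε`-chains of `X`. -/
def proximityGraph (X : Type*) [PseudoMetricSpace X] (ε : ℝ) : SimpleGraph X :=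
  SimpleGraph.fromRel fun x y => dist x y < ε

theorem proximityGraph_adj {X : Type*} [PseudoMetricSpace X] {ε : ℝ} {x y : X} :
    (proximityGraph X ε).Adj x y ↔ x ≠ y ∧ dist x y < ε := by
  simp [proximityGraph, dist_comm y x]

theorem proximityGraph_preconnected (X : Type*) [PseudoMetricSpace X] [PreconnectedSpace X]
    {ε : ℝ} (hε : 0 < ε) : (proximityGraph X ε).Preconnected := by
  refine PreconnectedSpace.induction₂' _ (fun x => ?_) ⟨fun _ _ _ => SimpleGraph.Reachable.trans⟩
  filter_upwards [ball_mem_nhds x hε] with y hy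
  suffices (proximityGraph X ε).Reachable x y from ⟨this, this.symm⟩
  rcases eq_or_ne x y with rfl | hxy
  · exact .rfl
  · exact (proximityGraph_adj.2 ⟨hxy, mem_ball'.1 hy⟩).reachable

theorem exists_chain_of_preconnectedSpace {X : Type*} [PseudoMetricSpace X] [PreconnectedSpace X]
    {ε : ℝ} (hε : 0 < ε) (x y : X) :
    ∃ (n : ℕ) (f : ℕ → X), f 0 = x ∧ (∀ i, n ≤ i → f i = y) ∧
      (∀ i, dist (f i) (f (i + 1)) < ε) ∧
      ∀ i j, i + 2 ≤ j → j ≤ n → ε ≤ dist (f i) (f j) := by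
  have hconn := proximityGraph_preconnected X hε
  obtain ⟨p, hp⟩ := (hconn x y).exists_walk_length_eq_dist
  refine ⟨p.length, p.getVert, p.getVert_zero, fun i hi => p.getVert_of_length_le hi,
    fun i => ?_, fun i j hij hj => ?_⟩
  · rcases lt_or_ge i p.length with hi | hi
    · exact (proximityGraph_adj.1 (p.adj_getVert_succ hi)).2
    · rw [p.getVert_of_length_le hi, p.getVert_of_length_le (hi.trans i.le_succ), dist_self]
      exact hε
  · by_contra! hlt
    rcases eq_or_ne (p.getVert i) (p.getVert j) with heq | hne
    · have := SimpleGraph.dist_le ((p.take i).append ((p.drop j).copy heq.symm rfl))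
      simp only [SimpleGraph.Walk.length_append, SimpleGraph.Walk.length_copy,
        SimpleGraph.Walk.take_length, SimpleGraph.Walk.drop_length] at this
      omega
    · have := SimpleGraph.dist_le
        ((p.take i).append (.cons (proximityGraph_adj.2 ⟨hne, hlt⟩) (p.drop j)))
      simp only [SimpleGraph.Walk.length_append, SimpleGraph.Walk.length_cons,
        SimpleGraph.Walk.take_length, SimpleGraph.Walk.drop_length] at this
      omega

theorem card_mul_le_hausdorffMeasure {X ι : Type*} [MetricSpace X] [MeasurableSpace X]
    [BorelSpace X] {U : Set X} (hU : IsPreconnected U) (hUm : MeasurableSet U)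
    {s : Finset ι} (hs : s.Nontrivial) {f : ι → X} (hfU : ∀ i ∈ s, f i ∈ U) {ε : ℝ}
    (hf : (s : Set ι).Pairwise fun i j => ε ≤ dist (f i) (f j)) :
    s.card * ENNReal.ofReal (ε / 2) ≤ μH[1] U := by
  have hball : ∀ i ∈ s, ENNReal.ofReal (ε / 2) ≤ μH[1] (U ∩ ball (f i) (ε / 2)) := by
    intro i hi
    obtain ⟨j, hj, hji⟩ := hs.exists_ne i
    refine ofReal_le_hausdorffMeasure_inter_ball hU (subset_closure (hfU i hi)) (hfU j hj) ?_
    linarith [hf hj hi hji, dist_nonneg (x := f j) (y := f i)]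
  calc s.card * ENNReal.ofReal (ε / 2)
      = ∑ _i ∈ s, ENNReal.ofReal (ε / 2) := by rw [Finset.sum_const, nsmul_eq_mul]
    _ ≤ ∑ i ∈ s, μH[1] (U ∩ ball (f i) (ε / 2)) := Finset.sum_le_sum hball
    _ = μH[1] (⋃ i ∈ s, U ∩ ball (f i) (ε / 2)) := by
      refine (measure_biUnion_finset (fun i hi j hj hij => ?_)
        fun i _ => hUm.inter measurableSet_ball).symm
      exact (ball_disjoint_ball (by linarith [hf hi hj hij])).mono inter_subset_right
        inter_subset_right
    _ ≤ μH[1] U := measure_mono (iUnion₂_subset fun i _ => inter_subset_left)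

theorem exists_short_chain {X : Type*} [MetricSpace X] [MeasurableSpace X] [BorelSpace X]
    [PreconnectedSpace X] (hfin : μH[1] (univ : Set X) ≠ ⊤) {ε : ℝ} (hε : 0 < ε) (x y : X) :
    ∃ (n : ℕ) (f : ℕ → X), f 0 = x ∧ (∀ i, n ≤ i → f i = y) ∧
      (∀ i, dist (f i) (f (i + 1)) < ε) ∧
      n * ε ≤ 4 * (μH[1] (univ : Set X)).toReal + ε := by
  obtain ⟨n, f, h0, hn, hstep, hsep⟩ := exists_chain_of_preconnectedSpace hε x y
  refine ⟨n, f, h0, hn, hstep, ?_⟩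
  set M := (μH[1] (univ : Set X)).toReal
  have hM : 0 ≤ M := ENNReal.toReal_nonneg
  rcases lt_or_ge n 2 with hn2 | hn2
  · have : (n : ℝ) ≤ 1 := by exact_mod_cast Nat.lt_succ_iff.1 hn2
    nlinarith
  have hnontriv : (Finset.range (n / 2 + 1)).Nontrivial :=
    ⟨0, by simp, 1, by simp; omega, zero_ne_one⟩
  -- A shortest chain has no shortcuts, so every second point of it is separated.
  have hpair : (Finset.range (n / 2 + 1) : Set ℕ).Pairwise
      fun i j => ε ≤ dist (f (2 * i)) (f (2 * j)) := by
    intro i hi j hj hij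
    simp only [Finset.coe_range, mem_Iio] at hi hj
    rcases hij.lt_or_gt with h | h
    · exact hsep _ _ (by omega) (by omega)
    · exact (hsep _ _ (by omega) (by omega)).trans_eq (dist_comm _ _)
  have hcard := card_mul_le_hausdorffMeasure isPreconnected_univ .univ hnontriv
    (fun i _ => mem_univ _) hpair
  rw [Finset.card_range, ← ENNReal.ofReal_natCast, ← ENNReal.ofReal_mul (by positivity),
    ENNReal.ofReal_le_iff_le_toReal hfin] at hcard
  have hhalf : (n : ℝ) ≤ 2 * (n / 2 + 1 : ℕ) := by exact_mod_cast (by omega)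
  nlinarith

end ProximityGraph

section Curves

open Set Filter Topology

variable {X : Type*} [MetricSpace X]

/-- `JoinedWithin ℓ x y` says that `x` and `y` are joined by a curve of length at most `ℓ`. The
curve is parametrised on the whole line at speed at most one and runs from `x` to `y` during
`[0, ℓ]`. -/
def JoinedWithin (ℓ : ℝ) (x y : X) : Prop :=
  0 ≤ ℓ ∧ ∃ γ : ℝ → X, LipschitzWith 1 γ ∧ γ 0 = x ∧ γ ℓ = y

theorem lipschitzOnWith_one_of_dist_le_sub {γ : ℝ → X} {I : Set ℝ}
    (h : ∀ s ∈ I, ∀ t ∈ I, s ≤ t → dist (γ s) (γ t) ≤ t - s) : LipschitzOnWith 1 γ I := by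
  refine LipschitzOnWith.of_dist_le_mul fun s hs t ht => ?_
  rw [NNReal.coe_one, one_mul]
  rcases le_total s t with hst | hst
  · rw [dist_comm s t, Real.dist_eq, abs_of_nonneg (sub_nonneg.2 hst)]
    exact h s hs t ht hst
  · rw [dist_comm, Real.dist_eq, abs_of_nonneg (sub_nonneg.2 hst)]
    exact h t ht s hs hst

theorem dist_le_sub_of_lipschitzWith_one {γ : ℝ → X} (h : LipschitzWith 1 γ) {s t : ℝ}
    (hst : s ≤ t) : dist (γ s) (γ t) ≤ t - s := by
  simpa [dist_comm s t, Real.dist_eq, abs_of_nonneg (sub_nonneg.2 hst)] using h.dist_le_mul s t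

theorem JoinedWithin.of_dist_le {α : Type*} {f : α → X} {v : α → ℝ} {a b : α} (hab : v a ≤ v b)
    (hf : ∀ p q, dist (f p) (f q) ≤ |v p - v q|) (hv : Icc (v a) (v b) ⊆ range v) :
    JoinedWithin (v b - v a) (f a) (f b) := by
  choose w hw using fun u : Icc (v a) (v b) => hv u.2
  have heq : ∀ p q, v p = v q → f p = f q := fun p q h =>
    dist_le_zero.1 ((hf p q).trans (by rw [h, sub_self, abs_zero]))
  refine ⟨sub_nonneg.2 hab, fun u => f (w (projIcc _ _ hab (v a + u))), ?_, heq _ _ ?_, heq _ _ ?_⟩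
  · refine LipschitzWith.mk_one fun s t => (hf _ _).trans ?_
    rw [hw, hw, ← Real.dist_eq, ← Subtype.dist_eq]
    simpa using (LipschitzWith.projIcc hab).dist_le_mul (v a + s) (v a + t)
  · rw [hw, add_zero, projIcc_left]
  · rw [hw, add_sub_cancel, projIcc_right]

theorem JoinedWithin.of_lipschitzWith_one {γ : ℝ → X} (hγ : LipschitzWith 1 γ) {s t : ℝ}
    (hst : s ≤ t) : JoinedWithin (t - s) (γ s) (γ t) :=
  .of_dist_le (v := id) hst (fun p q => by simpa [Real.dist_eq] using hγ.dist_le_mul p q) (by simp)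

theorem JoinedWithin.trans {ℓ r : ℝ} {x y z : X} (hxy : JoinedWithin ℓ x y)
    (hyz : JoinedWithin r y z) : JoinedWithin (ℓ + r) x z := by
  obtain ⟨hℓ, γ, hγ, rfl, rfl⟩ := hxy
  obtain ⟨hr, η, hη, hη0, rfl⟩ := hyz
  have hη0' : γ ℓ = η (ℓ - ℓ) := by rw [sub_self, hη0]
  refine ⟨add_nonneg hℓ hr, fun t => if t ≤ ℓ then γ t else η (t - ℓ),
    lipschitzOnWith_univ.1 (lipschitzOnWith_one_of_dist_le_sub fun s _ t _ hst => ?_),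
    if_pos hℓ, ?_⟩
  · rcases le_or_gt t ℓ with ht | ht
    · simpa only [ht, hst.trans ht, if_true] using dist_le_sub_of_lipschitzWith_one hγ hst
    have hη' {s : ℝ} (hst : s ≤ t) : dist (η (s - ℓ)) (η (t - ℓ)) ≤ t - s := by
      simpa using dist_le_sub_of_lipschitzWith_one hη (sub_le_sub_right hst ℓ)
    rcases le_or_gt s ℓ with hs | hs
    · simp only [hs, not_le.2 ht, if_true, if_false]
      calc dist (γ s) (η (t - ℓ)) ≤ dist (γ s) (γ ℓ) + dist (γ ℓ) (η (t - ℓ)) :=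
            dist_triangle _ _ _
        _ ≤ (ℓ - s) + (t - ℓ) :=
            add_le_add (dist_le_sub_of_lipschitzWith_one hγ hs) (hη0' ▸ hη' ht.le)
        _ = t - s := by ring
    · simpa only [not_le.2 hs, not_le.2 ht, if_false] using hη' hst
  · rcases hr.eq_or_lt with rfl | hr
    · simp [hη0]
    · simp [hr]

theorem exists_lipschitzWith_one_of_tendsto [CompactSpace X] {T : Set X} (hT : IsClosed T) {y : X}
    {g : ℕ → ℝ → X} {ℓ e : ℕ → ℝ} {ℓ₀ : ℝ} (hℓ : Tendsto ℓ atTop (𝓝 ℓ₀))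
    (he : Tendsto e atTop (𝓝 0)) (hgT : ∀ n, g n 0 ∈ T) (hgy : ∀ n, g n (ℓ n) = y)
    (hg : ∀ n s t, dist (g n s) (g n t) ≤ |s - t| + e n) :
    ∃ γ : ℝ → X, LipschitzWith 1 γ ∧ γ 0 ∈ T ∧ γ ℓ₀ = y := by
  obtain ⟨γ, -, hγ⟩ := (isCompact_univ (X := ℝ → X)).ultrafilter_le_nhds
    ((hyperfilter ℕ).map g) (by simp)
  have hγt : ∀ t, Tendsto (fun n => g n t) (hyperfilter ℕ) (𝓝 (γ t)) := tendsto_pi_nhds.1 hγ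
  replace hℓ := hℓ.mono_left Nat.hyperfilter_le_atTop
  replace he := he.mono_left Nat.hyperfilter_le_atTop
  refine ⟨γ, LipschitzWith.mk_one fun s t => ?_,
    hT.mem_of_tendsto (hγt 0) (.of_forall hgT), dist_le_zero.1 ?_⟩
  · have hlim : Tendsto (fun n => |s - t| + e n) (hyperfilter ℕ) (𝓝 (dist s t)) := by
      simpa [Real.dist_eq] using he.const_add |s - t|
    exact le_of_tendsto_of_tendsto ((hγt s).dist (hγt t)) hlim (.of_forall fun n => hg n s t)
  · have hlim : Tendsto (fun n => |ℓ₀ - ℓ n| + e n) (hyperfilter ℕ) (𝓝 0) := by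
      simpa using (hℓ.const_sub ℓ₀).abs.add he
    exact le_of_tendsto_of_tendsto ((hγt ℓ₀).dist tendsto_const_nhds) hlim
      (.of_forall fun n => hgy n ▸ hg n ℓ₀ (ℓ n))

theorem dist_le_sub_mul_of_dist_succ_lt {f : ℕ → X} {ε : ℝ}
    (hf : ∀ i, dist (f i) (f (i + 1)) < ε) {a b : ℕ} (hab : a ≤ b) :
    dist (f a) (f b) ≤ (b - a) * ε := by
  calc dist (f a) (f b) ≤ ∑ i ∈ Finset.Ico a b, dist (f i) (f (i + 1)) :=
        dist_le_Ico_sum_dist f hab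
    _ ≤ ∑ _i ∈ Finset.Ico a b, ε := Finset.sum_le_sum fun i _ => (hf i).le
    _ = (b - a) * ε := by simp [Nat.cast_sub hab]

theorem dist_apply_natFloor_div_le {f : ℕ → X} {ε : ℝ} (hε : 0 < ε)
    (hf : ∀ i, dist (f i) (f (i + 1)) < ε) (s t : ℝ) :
    dist (f ⌊s / ε⌋₊) (f ⌊t / ε⌋₊) ≤ |s - t| + ε := by
  wlog hst : s ≤ t generalizing s t
  · rw [dist_comm, abs_sub_comm]
    exact this t s (le_of_not_ge hst)
  rcases le_total t 0 with ht | ht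
  · rw [Nat.floor_of_nonpos (div_nonpos_of_nonpos_of_nonneg ht hε.le),
      Nat.floor_of_nonpos (div_nonpos_of_nonpos_of_nonneg (hst.trans ht) hε.le), dist_self]
    positivity
  calc dist (f ⌊s / ε⌋₊) (f ⌊t / ε⌋₊) ≤ (⌊t / ε⌋₊ - ⌊s / ε⌋₊) * ε :=
        dist_le_sub_mul_of_dist_succ_lt hf (Nat.floor_le_floor (by gcongr))
    _ ≤ (t / ε - (s / ε - 1)) * ε := by
        gcongr
        · exact Nat.floor_le (by positivity)
        · exact (Nat.sub_one_lt_floor _).le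
    _ = t - s + ε := by field_simp; ring
    _ ≤ |s - t| + ε := by grw [abs_sub_comm, ← le_abs_self]

theorem exists_joinedWithin [CompactSpace X] [PreconnectedSpace X] [MeasurableSpace X]
    [BorelSpace X] (hfin : μH[1] (univ : Set X) ≠ ⊤) (x y : X) : ∃ ℓ, JoinedWithin ℓ x y := by
  set M := (μH[1] (univ : Set X)).toReal
  have hM : 0 ≤ M := ENNReal.toReal_nonneg
  have hε (k : ℕ) : (0 : ℝ) < 1 / (k + 1) := Nat.one_div_pos_of_nat
  choose n f hf0 hfn hstep hlen using fun k => exists_short_chain hfin (hε k) x y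
  have hend (k : ℕ) : n k ≤ ⌊(4 * M + 1) / (1 / ((k : ℝ) + 1))⌋₊ := by
    refine Nat.le_floor ((le_div_iff₀ (hε k)).2 ((hlen k).trans ?_))
    gcongr
    exact div_le_one_of_le₀ (by simp) (by positivity)
  obtain ⟨γ, hγ, hγx, hγy⟩ := exists_lipschitzWith_one_of_tendsto
    (g := fun k t => f k ⌊t / (1 / ((k : ℝ) + 1))⌋₊) (isClosed_singleton (x := x))
    tendsto_const_nhds tendsto_one_div_add_atTop_nhds_zero_nat (fun k => by simp [hf0])
    (fun k => hfn k _ (hend k)) (fun k => dist_apply_natFloor_div_le (hε k) (hstep k))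
  exact ⟨4 * M + 1, by linarith, γ, hγ, hγx, hγy⟩

end Curves

section ShortestCurves

open Set Filter Topology

variable {X : Type*} [MetricSpace X]

/-- `IsShortestFrom T γ ℓ` says that `γ`, run at speed at most one during `[0, ℓ]`, is a shortest
curve from the set `T` to its endpoint `γ ℓ`. -/
structure IsShortestFrom (T : Set X) (γ : ℝ → X) (ℓ : ℝ) : Prop where
  nonneg : 0 ≤ ℓ
  lipschitzWith : LipschitzWith 1 γ
  start_mem : γ 0 ∈ T
  le_of_joinedWithin : ∀ z ∈ T, ∀ r, JoinedWithin r z (γ ℓ) → ℓ ≤ r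

theorem exists_isShortestFrom [CompactSpace X] [PreconnectedSpace X] [MeasurableSpace X]
    [BorelSpace X] (hfin : μH[1] (univ : Set X) ≠ ⊤) {T : Set X} (hT : IsClosed T)
    (hne : T.Nonempty) (y : X) : ∃ γ ℓ, IsShortestFrom T γ ℓ ∧ γ ℓ = y := by
  set R := {r | ∃ z ∈ T, JoinedWithin r z y}
  have hRne : R.Nonempty := by
    obtain ⟨z, hz⟩ := hne
    exact (exists_joinedWithin hfin z y).imp fun r hr => ⟨z, hz, hr⟩
  have hRnonneg : ∀ r ∈ R, 0 ≤ r := fun r ⟨_, _, hr⟩ => hr.1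
  have hRbdd : BddBelow R := ⟨0, hRnonneg⟩
  obtain ⟨ℓ, -, hℓ, hℓR⟩ := exists_seq_tendsto_sInf hRne hRbdd
  choose z hzT _ g hg hg0 hgℓ using hℓR
  obtain ⟨γ, hγ, hγT, hγy⟩ := exists_lipschitzWith_one_of_tendsto hT hℓ
    (tendsto_const_nhds (x := (0 : ℝ))) (fun n => (hg0 n).symm ▸ hzT n) hgℓ
    (fun n s t => by simpa [Real.dist_eq] using (hg n).dist_le_mul s t)
  exact ⟨γ, sInf R, ⟨le_csInf hRne hRnonneg, hγ, hγT, fun z hz r hr =>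
    csInf_le hRbdd ⟨z, hz, hγy ▸ hr⟩⟩, hγy⟩

namespace IsShortestFrom

variable {T : Set X} {γ : ℝ → X} {ℓ : ℝ}

theorem sub_le_of_joinedWithin (h : IsShortestFrom T γ ℓ) {s t r : ℝ} (hs : 0 ≤ s) (ht : t ≤ ℓ)
    (hr : JoinedWithin r (γ s) (γ t)) : t - s ≤ r := by
  have := h.le_of_joinedWithin _ h.start_mem _
    (((JoinedWithin.of_lipschitzWith_one h.lipschitzWith hs).trans hr).trans
      (.of_lipschitzWith_one h.lipschitzWith ht))
  linarith

theorem injOn (h : IsShortestFrom T γ ℓ) : InjOn γ (Icc 0 ℓ) := by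
  have hle : ∀ s ∈ Icc 0 ℓ, ∀ t ∈ Icc 0 ℓ, γ s = γ t → t ≤ s := by
    intro s hs t ht hst
    have hjoin : JoinedWithin 0 (γ s) (γ t) := by
      simpa [← hst] using JoinedWithin.of_lipschitzWith_one h.lipschitzWith (le_refl s)
    exact sub_nonpos.1 (h.sub_le_of_joinedWithin hs.1 ht.2 hjoin)
  exact fun s hs t ht hst => (hle t ht s hs hst.symm).antisymm (hle s hs t ht hst)

theorem notMem (h : IsShortestFrom T γ ℓ) {t : ℝ} (ht : t ∈ Ioc 0 ℓ) : γ t ∉ T := fun htT => by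
  have := h.le_of_joinedWithin _ htT _ (.of_lipschitzWith_one h.lipschitzWith ht.2)
  linarith [ht.1]

end IsShortestFrom

variable [MeasurableSpace X] [BorelSpace X]

theorem hausdorffMeasure_image_Icc_le {γ : ℝ → X} (hγ : LipschitzWith 1 γ) (a b : ℝ) :
    μH[1] (γ '' Icc a b) ≤ ENNReal.ofReal (b - a) := by
  simpa [hausdorffMeasure_real] using hγ.hausdorffMeasure_image_le zero_le_one (Icc a b)

theorem hausdorffMeasure_image_Icc_add {γ : ℝ → X} {ℓ : ℝ} (hγ : Continuous γ)
    (hinj : InjOn γ (Icc 0 ℓ)) {s t : ℝ} (hs : 0 ≤ s) (hst : s ≤ t) (ht : t ≤ ℓ) :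
    μH[1] (γ '' Icc 0 t) = μH[1] (γ '' Icc 0 s) + μH[1] (γ '' Icc s t) := by
  have : NullSingletonClass (μH[1] : Measure X) := Measure.nullSingletonClass_hausdorff X one_pos
  have hmeas : MeasurableSet (γ '' Icc 0 s) := (isCompact_Icc.image hγ).measurableSet
  have hinter : γ '' Icc 0 s ∩ γ '' Icc s t = {γ s} := by
    rw [← hinj.image_inter (Icc_subset_Icc le_rfl (hst.trans ht)) (Icc_subset_Icc hs ht),
      Icc_inter_Icc_eq_singleton hs hst, image_singleton]
  rw [← measure_union₀' hmeas.nullMeasurableSet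
    (by rw [AEDisjoint, hinter, measure_singleton]), ← image_union, Icc_union_Icc_eq_Icc hs hst]

theorem joinedWithin_hausdorffMeasure {γ : ℝ → X} {ℓ : ℝ} (hγ : LipschitzWith 1 γ)
    (hinj : InjOn γ (Icc 0 ℓ)) (hℓ : 0 ≤ ℓ) :
    JoinedWithin (μH[1] (γ '' Icc 0 ℓ)).toReal (γ 0) (γ ℓ) := by
  have : NullSingletonClass (μH[1] : Measure X) := Measure.nullSingletonClass_hausdorff X one_pos
  -- Reparametrised by `v`, the measure of the arc run so far, `γ` has speed at most one.
  set v : ℝ → ℝ := fun t => (μH[1] (γ '' Icc 0 t)).toReal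
  have hfin (s t : ℝ) : μH[1] (γ '' Icc s t) ≠ ⊤ :=
    ne_top_of_le_ne_top ENNReal.ofReal_ne_top (hausdorffMeasure_image_Icc_le hγ s t)
  have hsub {s t : ℝ} (hs : 0 ≤ s) (hst : s ≤ t) (ht : t ≤ ℓ) :
      v t - v s = (μH[1] (γ '' Icc s t)).toReal := by
    simp only [v, hausdorffMeasure_image_Icc_add hγ.continuous hinj hs hst ht,
      ENNReal.toReal_add (hfin _ _) (hfin _ _), add_sub_cancel_left]
  have hvγ {s t : ℝ} (hs : 0 ≤ s) (hst : s ≤ t) (ht : t ≤ ℓ) : dist (γ s) (γ t) ≤ v t - v s := by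
    rw [hsub hs hst ht, dist_edist]
    exact ENNReal.toReal_mono (hfin _ _) (edist_le_hausdorffMeasure
      (isPreconnected_Icc.image γ hγ.continuous.continuousOn)
      (mem_image_of_mem γ (left_mem_Icc.2 hst)) (mem_image_of_mem γ (right_mem_Icc.2 hst)))
  have hv : LipschitzOnWith 1 v (Icc 0 ℓ) := by
    refine lipschitzOnWith_one_of_dist_le_sub fun s hs t ht hst => ?_
    rw [dist_comm, Real.dist_eq, hsub hs.1 hst ht.2, abs_of_nonneg ENNReal.toReal_nonneg]
    exact ENNReal.toReal_le_of_le_ofReal (sub_nonneg.2 hst) (hausdorffMeasure_image_Icc_le hγ s t)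
  have hv0 : v 0 = 0 := by simp [v]
  have hjoin := JoinedWithin.of_dist_le (f := fun t : Icc 0 ℓ => γ t) (v := fun t => v t)
    (a := ⟨0, left_mem_Icc.2 hℓ⟩) (b := ⟨ℓ, right_mem_Icc.2 hℓ⟩) ?_ (fun p q => ?_) ?_
  · simpa only [hv0, sub_zero] using hjoin
  · simp only
    linarith [hvγ le_rfl hℓ le_rfl, dist_nonneg (x := γ 0) (y := γ ℓ)]
  · rcases le_total p q with hpq | hpq
    · rw [abs_sub_comm]
      exact (hvγ p.2.1 hpq q.2.2).trans (le_abs_self _)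
    · rw [dist_comm]
      exact (hvγ q.2.1 hpq p.2.2).trans (le_abs_self _)
  · intro u hu
    obtain ⟨t, ht, rfl⟩ := intermediate_value_Icc hℓ hv.continuousOn hu
    exact ⟨⟨t, ht⟩, rfl⟩

theorem IsShortestFrom.ofReal_le_hausdorffMeasure {T : Set X} {γ : ℝ → X} {ℓ : ℝ}
    (h : IsShortestFrom T γ ℓ) : ENNReal.ofReal ℓ ≤ μH[1] (γ '' Icc 0 ℓ \ T) := by
  have : NullSingletonClass (μH[1] : Measure X) := Measure.nullSingletonClass_hausdorff X one_pos
  have hsub : γ '' Icc 0 ℓ ⊆ γ '' Icc 0 ℓ \ T ∪ {γ 0} := by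
    rintro _ ⟨t, ht, rfl⟩
    rcases ht.1.eq_or_lt with rfl | h0
    · exact .inr rfl
    · exact .inl ⟨mem_image_of_mem γ ht, h.notMem ⟨h0, ht.2⟩⟩
  calc ENNReal.ofReal ℓ ≤ ENNReal.ofReal (μH[1] (γ '' Icc 0 ℓ)).toReal :=
        ENNReal.ofReal_le_ofReal (h.le_of_joinedWithin _ h.start_mem _
          (joinedWithin_hausdorffMeasure h.lipschitzWith h.injOn h.nonneg))
    _ ≤ μH[1] (γ '' Icc 0 ℓ) := ENNReal.ofReal_toReal_le
    _ ≤ μH[1] (γ '' Icc 0 ℓ \ T ∪ {γ 0}) := measure_mono hsub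
    _ ≤ μH[1] (γ '' Icc 0 ℓ \ T) + μH[1] {γ 0} := measure_union_le _ _
    _ = μH[1] (γ '' Icc 0 ℓ \ T) := by rw [measure_singleton, add_zero]

theorem exists_curve_from [CompactSpace X] [PreconnectedSpace X]
    (hfin : μH[1] (univ : Set X) ≠ ⊤) {T : Set X} (hT : IsClosed T) (hne : T.Nonempty) :
    ∃ (ℓ : ℝ≥0) (γ : unitInterval → X), LipschitzWith ℓ γ ∧ γ 0 ∈ T ∧ (∀ y, infDist y T ≤ ℓ) ∧
      ℓ ≤ μH[1] (range γ \ T) := by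
  obtain ⟨x, -, hx⟩ := isCompact_univ.exists_isMaxOn (hne.mono (subset_univ T))
    (continuous_infDist_pt T).continuousOn
  obtain ⟨γ, ℓ, h, rfl⟩ := exists_isShortestFrom hfin hT hne x
  lift ℓ to ℝ≥0 using h.nonneg
  have hscale : LipschitzWith ℓ fun t : unitInterval => (ℓ : ℝ) * t := by
    simpa [Function.comp_def] using
      (lipschitzWith_smul (ℓ : ℝ)).comp (LipschitzWith.subtype_val unitInterval)
  refine ⟨ℓ, fun t => γ (ℓ * t), by simpa [Function.comp_def] using h.lipschitzWith.comp hscale,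
    by simpa using h.start_mem, fun y => ?_, ?_⟩
  · calc infDist y T ≤ infDist (γ ℓ) T := hx (mem_univ y)
      _ ≤ dist (γ ℓ) (γ 0) := infDist_le_dist_of_mem h.start_mem
      _ ≤ ℓ := by
        simpa [dist_comm] using dist_le_sub_of_lipschitzWith_one h.lipschitzWith h.nonneg
  · have hIcc : (fun t => (ℓ : ℝ) * t) '' Icc 0 1 = Icc 0 (ℓ : ℝ) := by
      rw [image_mul_left_Icc h.nonneg zero_le_one, mul_zero, mul_one]
    have hrange : γ '' Icc 0 ℓ = range fun t : unitInterval => γ (ℓ * t) := by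
      rw [← hIcc, image_image, image_eq_range]
    simpa [hrange] using h.ofReal_le_hausdorffMeasure

end ShortestCurves

section Exhaustion

open Set Filter Topology

theorem sum_range_le_measure {α : Type*} [MeasurableSpace α] {μ : Measure α} {T : ℕ → Set α}
    (hT : ∀ n, MeasurableSet (T n)) (hmono : Monotone T) {m : ℕ → ℝ≥0∞}
    (hm : ∀ n, m n ≤ μ (T (n + 1) \ T n)) (k : ℕ) : ∑ j ∈ Finset.range k, m j ≤ μ (T k) := by
  induction k with
  | zero => simp
  | succ k ih =>
    rw [Finset.sum_range_succ, ← union_eq_self_of_subset_left (hmono k.le_succ),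
      ← measure_add_sdiff (hT k).nullMeasurableSet]
    exact add_le_add ih (hm k)

variable {X : Type*} [MetricSpace X] [MeasurableSpace X] [BorelSpace X] [CompactSpace X]
  [PreconnectedSpace X] [Nonempty X]

theorem exists_exhausting_curves (hfin : μH[1] (univ : Set X) ≠ ⊤) :
    ∃ (ℓ : ℕ → ℝ≥0) (γ : ℕ → unitInterval → X), (∀ j, LipschitzWith (ℓ j) (γ j)) ∧
      (∀ k, ∑ j ∈ Finset.range k, (ℓ j : ℝ≥0∞) ≤ μH[1] (univ : Set X)) ∧
      (∀ j, γ (j + 1) 0 ∈ accumulate (fun i => range (γ i)) j) ∧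
      ∀ k y, ∃ z ∈ accumulate (fun i => range (γ i)) k,
        (k + 1) * dist y z ≤ ∑ j ∈ Finset.range (k + 1), (ℓ j : ℝ) := by
  let x₀ : X := Classical.arbitrary X
  choose ℓ γ hlip hstart hdist hℓ using fun T : TopologicalSpace.NonemptyCompacts X =>
    exists_curve_from hfin T.isCompact.isClosed T.nonempty
  let extend (T : TopologicalSpace.NonemptyCompacts X) : TopologicalSpace.NonemptyCompacts X :=
    T ⊔ ⟨⟨range (γ T), isCompact_range (hlip T).continuous⟩, range_nonempty _⟩
  let T (n : ℕ) : TopologicalSpace.NonemptyCompacts X := extend^[n] {x₀}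
  have hsucc (n : ℕ) : (T (n + 1) : Set X) = (T n : Set X) ∪ range (γ (T n)) := by
    simp only [T, Function.iterate_succ_apply']
    rfl
  have hmono : Monotone fun n => (T n : Set X) :=
    monotone_nat_of_le_succ fun n => (hsucc n).symm ▸ subset_union_left
  have hacc (n : ℕ) : (T (n + 1) : Set X) = accumulate (fun i => range (γ (T i))) n := by
    induction n with
    | zero =>
      rw [hsucc, accumulate_zero_nat, union_eq_right]
      rintro _ rfl
      exact ⟨0, hstart (T 0)⟩
    | succ n ih => rw [hsucc, ih, accumulate_succ]
  refine ⟨fun n => ℓ (T n), fun n => γ (T n), fun n => hlip _, fun k => ?_,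
    fun j => hacc j ▸ hstart _, fun k y => ?_⟩
  · refine (sum_range_le_measure (T := fun n => T n)
      (fun n => (T n).isCompact.measurableSet) hmono (fun n => ?_) k).trans
        (measure_mono (subset_univ _))
    simpa only [hsucc, union_sdiff_left] using hℓ (T n)
  · obtain ⟨z, hz, hyz⟩ :=
      (T (k + 1)).isCompact.exists_infDist_eq_dist (T (k + 1)).nonempty y
    have hle : ∀ j ∈ Finset.range (k + 1), dist y z ≤ ℓ (T j) := fun j hj =>
      hyz ▸ (infDist_le_infDist_of_subset (hmono (Finset.mem_range.1 hj).le)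
        (T j).nonempty).trans (hdist (T j) y)
    exact ⟨z, hacc k ▸ hz, by simpa using Finset.card_nsmul_le_sum _ _ _ hle⟩

end Exhaustion

section ConnectedUnion

open Set

variable {S Y : Type*} [TopologicalSpace S] [TopologicalSpace Y] {σ : S → Y} {C : Set Y}

theorem exists_mem_of_isClopen_of_isPreconnected_union_range [CompactSpace S] [T2Space Y]
    (hσ : Continuous σ) (hinj : Function.Injective σ) (hC : IsClosed C) (hCne : C.Nonempty)
    (hU : IsPreconnected (C ∪ range σ)) {A : Set S} (hA : IsClopen A) (hAne : A.Nonempty) :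
    ∃ a ∈ A, σ a ∈ C := by
  have hclosed {B : Set S} (hB : IsClosed B) : IsClosed (σ '' B) :=
    (hB.isCompact.image hσ).isClosed
  have hcover : C ∪ range σ ⊆ C ∪ σ '' Aᶜ ∪ σ '' A := by
    rw [union_assoc, ← image_union, compl_union_self, image_univ]
  obtain ⟨c, hc⟩ := hCne
  obtain ⟨a, ha⟩ := hAne
  obtain ⟨_, -, hb | hb, b, hbA, rfl⟩ := isPreconnected_closed_iff.1 hU _ _
    (hC.union (hclosed hA.isOpen.isClosed_compl)) (hclosed hA.isClosed) hcover
    ⟨c, .inl hc, .inl hc⟩ ⟨σ a, .inr (mem_range_self a), mem_image_of_mem σ ha⟩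
  · exact ⟨b, hbA, hb⟩
  · exact absurd hbA (hinj.mem_set_image.1 hb)

theorem isPreconnected_union_range_of_forall_isClopen (hσ : Continuous σ) (hC : IsPreconnected C)
    (h : ∀ A : Set S, IsClopen A → A.Nonempty → ∃ a ∈ A, σ a ∈ C) :
    IsPreconnected (C ∪ range σ) := by
  rw [isPreconnected_iff_subset_of_disjoint_closed] at hC ⊢
  have key {u v : Set Y} (hu : IsClosed u) (hv : IsClosed v) (hcover : C ∪ range σ ⊆ u ∪ v)
      (hdisj : (C ∪ range σ) ∩ (u ∩ v) = ∅) (hCu : C ⊆ u) : C ∪ range σ ⊆ u := by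
    have hcompl : (σ ⁻¹' u)ᶜ = σ ⁻¹' v := by
      refine (IsCompl.of_le ?_ ?_).compl_eq
      · exact fun s hs => (hdisj ▸ ⟨.inr (mem_range_self s), hs⟩ : σ s ∈ (∅ : Set Y))
      · exact fun s _ => hcover (.inr (mem_range_self s))
    have hclopen : IsClopen (σ ⁻¹' v) :=
      ⟨hv.preimage hσ, hcompl ▸ (hu.preimage hσ).isOpen_compl⟩
    refine union_subset hCu (range_subset_iff.2 fun s => by_contra fun hs => ?_)
    obtain ⟨a, hav, haC⟩ := h _ hclopen ⟨s, hcompl ▸ hs⟩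
    exact (hdisj ▸ ⟨.inl haC, hCu haC, hav⟩ : σ a ∈ (∅ : Set Y))
  intro u v hu hv hcover hdisj
  refine (hC u v hu hv (subset_union_left.trans hcover) ?_).imp (key hu hv hcover hdisj)
    (key hv hu (by rwa [union_comm v]) (by rwa [inter_comm v]))
  exact subset_empty_iff.1 (hdisj ▸ inter_subset_inter_left _ subset_union_left)

end ConnectedUnion

section CurveSystems

open Set Filter Topology

theorem hausdorffMeasure_range_le {X : Type*} [MetricSpace X] [MeasurableSpace X] [BorelSpace X]
    {ℓ : ℝ≥0} {γ : unitInterval → X} (hγ : LipschitzWith ℓ γ) : μH[1] (range γ) ≤ ℓ := by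
  have hunit : μH[1] (univ : Set unitInterval) = 1 := by
    rw [← isometry_subtype_coe.hausdorffMeasure_image (.inl zero_le_one), image_univ,
      Subtype.range_coe, hausdorffMeasure_real, Real.volume_Icc, sub_zero, ENNReal.ofReal_one]
  simpa [hunit] using hγ.hausdorffMeasure_image_le zero_le_one univ

/-- An isometric copy of `S` in `Y` together with a sequence of curves of total length at most `L`,
each starting on the previous ones, such that the first `k + 1` of them come within `L / (k + 1)`
of every nonempty clopen piece of `S`. This is the data of a continuum of length at most `L`
joining `S` in a form that is preserved by limits: the rates in `exists_dist_le` do not depend on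
the system, and the closure of the union of the curves is the continuum. -/
structure CurveSystem (S Y : Type*) [MetricSpace S] [MetricSpace Y] (L : ℝ≥0) where
  emb : S → Y
  curve : ℕ → unitInterval → Y
  length : ℕ → ℝ≥0
  isometry_emb : Isometry emb
  lipschitzWith_curve (j : ℕ) : LipschitzWith (length j) (curve j)
  sum_length_le (k : ℕ) : ∑ j ∈ Finset.range k, length j ≤ L
  curve_zero_mem (j : ℕ) : curve (j + 1) 0 ∈ accumulate (fun i => range (curve i)) j
  exists_dist_le {A : Set S} (hA : IsClopen A) (hne : A.Nonempty) (k : ℕ) :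
    ∃ a ∈ A, ∃ y ∈ accumulate (fun i => range (curve i)) k, dist (emb a) y ≤ L / (k + 1)

namespace CurveSystem

variable {S Y : Type*} [MetricSpace S] [MetricSpace Y] {L : ℝ≥0} (c : CurveSystem S Y L)

/-- The union of the curves up to the `k`-th one, included. -/
def stage (k : ℕ) : Set Y := accumulate (fun i => range (c.curve i)) k

/-- All the points of the system, as one map on a parameter space not depending on the system. -/
def param : S ⊕ ℕ × unitInterval → Y := Sum.elim c.emb fun p => c.curve p.1 p.2

theorem stage_zero : c.stage 0 = range (c.curve 0) := accumulate_zero_nat _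

theorem stage_succ (k : ℕ) : c.stage (k + 1) = c.stage k ∪ range (c.curve (k + 1)) :=
  accumulate_succ _ k

theorem iUnion_stage : ⋃ k, c.stage k = ⋃ j, range (c.curve j) := iUnion_accumulate

theorem curve_mem_stage {j k : ℕ} (hjk : j ≤ k) (t : unitInterval) : c.curve j t ∈ c.stage k :=
  mem_accumulate.2 ⟨j, hjk, mem_range_self t⟩

theorem nonempty_stage (k : ℕ) : (c.stage k).Nonempty := ⟨_, c.curve_mem_stage k.zero_le 0⟩

theorem isCompact_stage (k : ℕ) : IsCompact (c.stage k) :=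
  (finite_Iic k).isCompact_biUnion fun j _ => isCompact_range (c.lipschitzWith_curve j).continuous

theorem isPreconnected_stage (k : ℕ) : IsPreconnected (c.stage k) := by
  have hcurve (j : ℕ) : IsPreconnected (range (c.curve j)) :=
    isPreconnected_range (c.lipschitzWith_curve j).continuous
  induction k with
  | zero => exact c.stage_zero ▸ hcurve 0
  | succ k ih =>
    exact c.stage_succ k ▸ ih.union _ (c.curve_zero_mem k) (mem_range_self 0) (hcurve (k + 1))

theorem dist_curve_le (j : ℕ) (s t : unitInterval) :
    dist (c.curve j s) (c.curve j t) ≤ c.length j :=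
  ((c.lipschitzWith_curve j).dist_le_mul s t).trans
    (mul_le_of_le_one_right (c.length j).2 (Real.dist_le_of_mem_Icc_01 s.2 t.2))

theorem infDist_stage_le_sum {k m : ℕ} (hkm : k ≤ m) {y : Y} (hy : y ∈ c.stage m) :
    infDist y (c.stage k) ≤ ∑ i ∈ Finset.Ico (k + 1) (m + 1), (c.length i : ℝ) := by
  induction m, hkm using Nat.le_induction generalizing y with
  | base => simp [infDist_zero_of_mem hy]
  | succ m hkm ih =>
    rw [Finset.sum_Ico_succ_top (by lia)]
    rw [stage_succ] at hy
    obtain hy | ⟨t, rfl⟩ := hy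
    · exact (ih hy).trans (le_add_of_nonneg_right (c.length _).2)
    · calc infDist (c.curve (m + 1) t) (c.stage k)
          ≤ infDist (c.curve (m + 1) 0) (c.stage k)
            + dist (c.curve (m + 1) t) (c.curve (m + 1) 0) := infDist_le_infDist_add_dist
        _ ≤ _ := add_le_add (ih (c.curve_zero_mem m)) (c.dist_curve_le _ _ _)

theorem length_le (j : ℕ) : c.length j ≤ L :=
  (Finset.single_le_sum (fun _ _ => zero_le) (Finset.self_mem_range_succ j)).trans
    (c.sum_length_le (j + 1))

theorem summable_length : Summable c.length := NNReal.summable_of_sum_range_le c.sum_length_le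

theorem infDist_curve_stage_le (j k : ℕ) (t : unitInterval) :
    infDist (c.curve j t) (c.stage k) ≤ ↑(∑' i, c.length (i + (k + 1))) := by
  have hmem : c.curve j t ∈ c.stage (max j k) := c.curve_mem_stage (le_max_left j k) t
  refine (c.infDist_stage_le_sum (le_max_right j k) hmem).trans ?_
  rw [Finset.sum_Ico_eq_sum_range]
  simp only [add_comm (k + 1)]
  have hsum := (NNReal.summable_nat_add_iff (k + 1)).2 c.summable_length
  exact_mod_cast hsum.sum_le_tsum _ fun _ _ => zero_le

theorem dist_curve_curve_zero_le (j : ℕ) (t : unitInterval) :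
    dist (c.curve j t) (c.curve 0 0) ≤ L := by
  obtain ⟨y, hy, hdist⟩ :=
    (c.isCompact_stage 0).exists_infDist_eq_dist (c.nonempty_stage 0) (c.curve j t)
  obtain ⟨s, rfl⟩ := c.stage_zero.subset hy
  calc dist (c.curve j t) (c.curve 0 0)
      ≤ dist (c.curve j t) (c.curve 0 s) + dist (c.curve 0 s) (c.curve 0 0) := dist_triangle _ _ _
    _ ≤ ∑ i ∈ Finset.Ico 1 (j + 1), (c.length i : ℝ) + c.length 0 :=
      add_le_add (hdist ▸ c.infDist_stage_le_sum j.zero_le (c.curve_mem_stage le_rfl t))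
        (c.dist_curve_le 0 s 0)
    _ = ∑ i ∈ Finset.range (j + 1), (c.length i : ℝ) := by
      rw [Finset.range_eq_Ico, Finset.sum_eq_sum_Ico_succ_bot j.succ_pos, add_comm]
    _ ≤ L := mod_cast c.sum_length_le (j + 1)

theorem dist_emb_curve_zero_le [CompactSpace S] (a : S) :
    dist (c.emb a) (c.curve 0 0) ≤ diam (univ : Set S) + 2 * L := by
  obtain ⟨b, -, y, hy, hby⟩ := c.exists_dist_le isClopen_univ ⟨a, mem_univ a⟩ 0
  obtain ⟨t, rfl⟩ := c.stage_zero.subset hy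
  calc dist (c.emb a) (c.curve 0 0)
      ≤ dist (c.emb a) (c.emb b) + dist (c.emb b) (c.curve 0 t)
        + dist (c.curve 0 t) (c.curve 0 0) := dist_triangle4 _ _ _ _
    _ ≤ diam (univ : Set S) + L + L := by
      gcongr
      · rw [c.isometry_emb.dist_eq]
        exact dist_le_diam_of_mem isCompact_univ.isBounded (mem_univ a) (mem_univ b)
      · simpa using hby
      · exact c.dist_curve_curve_zero_le 0 t
    _ = diam (univ : Set S) + 2 * L := by ring

theorem dist_param_le [CompactSpace S] (p q : S ⊕ ℕ × unitInterval) :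
    dist (c.param p) (c.param q) ≤ 2 * (diam (univ : Set S) + 2 * L) := by
  have hbase (p : S ⊕ ℕ × unitInterval) :
      dist (c.param p) (c.curve 0 0) ≤ diam (univ : Set S) + 2 * L := by
    obtain a | ⟨j, t⟩ := p
    · exact c.dist_emb_curve_zero_le a
    · refine (c.dist_curve_curve_zero_le j t).trans ?_
      linarith [diam_nonneg (s := (univ : Set S)), L.coe_nonneg]
  linarith [dist_triangle_right (c.param p) (c.param q) (c.curve 0 0), hbase p, hbase q]

theorem totallyBounded_iUnion_curve : TotallyBounded (⋃ j, range (c.curve j)) := by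
  refine Metric.totallyBounded_iff.2 fun ε hε => ?_
  obtain ⟨k, hk⟩ : ∃ k, (∑' i, c.length (i + (k + 1)) : ℝ≥0) < ε / 2 := by
    have hlim := (NNReal.tendsto_sum_nat_add c.length).comp (tendsto_add_atTop_nat 1)
    exact ((NNReal.tendsto_coe.2 hlim).eventually_lt_const (half_pos hε)).exists
  obtain ⟨F, hF, hcover⟩ :=
    Metric.totallyBounded_iff.1 (c.isCompact_stage k).totallyBounded (ε / 2) (half_pos hε)
  refine ⟨F, hF, iUnion_subset fun j => range_subset_iff.2 fun t => ?_⟩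
  obtain ⟨y, hy, hty⟩ :=
    (infDist_lt_iff (c.nonempty_stage k)).1 ((c.infDist_curve_stage_le j k t).trans_lt hk)
  obtain ⟨z, hz, hyz⟩ := mem_iUnion₂.1 (hcover hy)
  have htz : dist (c.curve j t) z < ε / 2 + ε / 2 :=
    (dist_triangle _ y _).trans_lt (add_lt_add hty hyz)
  exact mem_iUnion₂.2 ⟨z, hz, add_halves ε ▸ htz⟩

theorem compactSpace_of_denseRange_param [CompactSpace S] [CompleteSpace Y]
    (h : DenseRange c.param) : CompactSpace Y := by
  have hrange : range c.param = range c.emb ∪ ⋃ j, range (c.curve j) := by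
    rw [param, Sum.elim_range]
    congr 1
    ext y
    simp
  have htot : TotallyBounded (range c.param) := hrange ▸
    (isCompact_range c.isometry_emb.continuous).totallyBounded.union c.totallyBounded_iUnion_curve
  exact ⟨h.closure_range ▸ htot.closure.isCompact_of_isClosed isClosed_closure⟩

theorem hausdorffMeasure_iUnion_curve_le [MeasurableSpace Y] [BorelSpace Y] :
    μH[1] (⋃ j, range (c.curve j)) ≤ L := by
  calc μH[1] (⋃ j, range (c.curve j)) ≤ ∑' j, μH[1] (range (c.curve j)) := measure_iUnion_le _
    _ ≤ ∑' j, (c.length j : ℝ≥0∞) := ENNReal.tsum_le_tsum fun j =>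
      hausdorffMeasure_range_le (c.lipschitzWith_curve j)
    _ ≤ L := ENNReal.tsum_le_of_sum_range_le fun k => mod_cast c.sum_length_le k

theorem isPreconnected_iUnion_curve : IsPreconnected (⋃ j, range (c.curve j)) :=
  c.iUnion_stage ▸ isPreconnected_iUnion
    ⟨c.curve 0 0, mem_iInter.2 fun k => c.curve_mem_stage k.zero_le 0⟩ c.isPreconnected_stage

theorem exists_emb_mem_closure [CompactSpace S] {A : Set S} (hA : IsClopen A) (hne : A.Nonempty) :
    ∃ a ∈ A, c.emb a ∈ closure (⋃ j, range (c.curve j)) := by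
  set U : Set Y := ⋃ j, range (c.curve j)
  obtain ⟨a, haA, ha⟩ := hA.isClosed.isCompact.exists_isMinOn hne
    ((continuous_infDist_pt U).comp c.isometry_emb.continuous).continuousOn
  have hlim : Tendsto (fun k : ℕ => (L : ℝ) / (k + 1)) atTop (𝓝 0) := by
    simpa [Function.comp_def] using
      (tendsto_const_div_atTop_nhds_zero_nat (L : ℝ)).comp (tendsto_add_atTop_nat 1)
  have hU : U.Nonempty := ⟨c.curve 0 0, mem_iUnion.2 ⟨0, mem_range_self 0⟩⟩
  refine ⟨a, haA, (mem_closure_iff_infDist_zero hU).2 <|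
    le_antisymm (ge_of_tendsto' hlim fun k => ?_) infDist_nonneg⟩
  obtain ⟨b, hbA, y, hy, hby⟩ := c.exists_dist_le hA hne k
  calc infDist (c.emb a) U ≤ infDist (c.emb b) U := ha hbA
    _ ≤ dist (c.emb b) y := infDist_le_dist_of_mem (accumulate_subset_iUnion k hy)
    _ ≤ L / (k + 1) := hby

theorem exists_continuum [CompactSpace S] [CompactSpace Y] [MeasurableSpace Y] [BorelSpace Y] :
    ∃ C : Set Y, IsCompact C ∧ IsConnected C ∧ IsCompact (C ∪ range c.emb) ∧
      IsConnected (C ∪ range c.emb) ∧ μH[1] C ≤ L := by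
  set U : Set Y := ⋃ j, range (c.curve j)
  have hUconn : IsPreconnected U := c.isPreconnected_iUnion_curve
  have hUmeas : MeasurableSet U := .iUnion fun j =>
    (isCompact_range (c.lipschitzWith_curve j).continuous).measurableSet
  have hUle : μH[1] U ≤ L := c.hausdorffMeasure_iUnion_curve_le
  have hne : (closure U).Nonempty := ⟨c.curve 0 0, subset_closure (mem_iUnion.2 ⟨0, 0, rfl⟩)⟩
  have hcont : Continuous c.emb := c.isometry_emb.continuous
  refine ⟨closure U, isClosed_closure.isCompact, ⟨hne, hUconn.closure⟩,
    isClosed_closure.isCompact.union (isCompact_range hcont), ⟨hne.inl, ?_⟩, ?_⟩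
  · exact isPreconnected_union_range_of_forall_isClopen hcont hUconn.closure
      fun A hA hAne => c.exists_emb_mem_closure hA hAne
  · rwa [hausdorffMeasure_closure_eq hUconn hUmeas (ne_top_of_le_ne_top ENNReal.coe_ne_top hUle)]

end CurveSystem

end CurveSystems

section OfContinuum

open Set

theorem CurveSystem.exists_of_continuum {S X : Type*} [MetricSpace S] [CompactSpace S]
    [MetricSpace X] [MeasurableSpace X] [BorelSpace X] {ι : S → X} (hι : Isometry ι) {C : Set X}
    (hC : IsCompact C) (hCconn : IsConnected C) (hU : IsPreconnected (C ∪ range ι)) {L : ℝ≥0}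
    (hL : μH[1] C ≤ L) : Nonempty (CurveSystem S X L) := by
  have : CompactSpace C := isCompact_iff_compactSpace.1 hC
  have : ConnectedSpace C := isConnected_iff_connectedSpace.1 hCconn
  have hmeas : μH[1] (univ : Set C) = μH[1] C := by
    rw [← isometry_subtype_coe.hausdorffMeasure_image (.inl zero_le_one), image_univ,
      Subtype.range_coe]
  obtain ⟨ℓ, γ, hlip, hsum, hstart, hdist⟩ :=
    exists_exhausting_curves (hmeas ▸ ne_top_of_le_ne_top ENNReal.coe_ne_top hL)
  have hsumL (k : ℕ) : ∑ j ∈ Finset.range k, ℓ j ≤ L := mod_cast (hsum k).trans (hmeas ▸ hL)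
  have hstage {k : ℕ} {y : C} (hy : y ∈ accumulate (fun i => range (γ i)) k) :
      (y : X) ∈ accumulate (fun i => range fun t => (γ i t : X)) k := by
    obtain ⟨i, hi, t, rfl⟩ := mem_accumulate.1 hy
    exact mem_accumulate.2 ⟨i, hi, t, rfl⟩
  refine ⟨⟨ι, fun j t => γ j t, ℓ, hι, fun j => ?_, hsumL, fun j => hstage (hstart j),
    fun hA hne k => ?_⟩⟩
  · simpa [Function.comp_def] using (LipschitzWith.subtype_val C).comp (hlip j)
  · obtain ⟨a, haA, haC⟩ := exists_mem_of_isClopen_of_isPreconnected_union_range hι.continuous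
      hι.injective hC.isClosed hCconn.nonempty hU hA hne
    obtain ⟨z, hz, haz⟩ := hdist k ⟨ι a, haC⟩
    refine ⟨a, haA, z, hstage hz, (le_div_iff₀' k.cast_add_one_pos).2 (haz.trans ?_)⟩
    exact mod_cast hsumL (k + 1)

theorem exists_curveSystem_of_absSteiner_lt {S : Type*} [MetricSpace S] [CompactSpace S] {L : ℝ≥0}
    (h : absSteiner S < L) : ∃ (X : Type) (_ : MetricSpace X), Nonempty (CurveSystem S X L) := by
  obtain ⟨_, ⟨X, _, ι, hι, rfl⟩, hrel⟩ := sInf_lt_iff.1 h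
  obtain ⟨_, ⟨C, hC, hCconn, -, hU, rfl⟩, hCL⟩ := sInf_lt_iff.1 hrel
  let _ : MeasurableSpace X := borel X
  have : BorelSpace X := ⟨rfl⟩
  exact ⟨X, inferInstance, CurveSystem.exists_of_continuum hι hC hCconn hU.isPreconnected hCL.le⟩

end OfContinuum

section Ultralimit

open Set Filter Topology

universe u

variable {ν : Type*} {I : Type u} {Y : ν → Type*} [∀ n, PseudoMetricSpace (Y n)] {U : Ultrafilter ν}
  {F : ∀ n, I → Y n}

theorem exists_ultralimit (U : Ultrafilter ν)
    (hF : ∀ a b, ∃ D, ∀ n, dist (F n a) (F n b) ≤ D) :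
    ∃ (Z : Type u) (_ : MetricSpace Z) (_ : CompleteSpace Z) (f : I → Z), DenseRange f ∧
      ∀ a b, Tendsto (fun n => dist (F n a) (F n b)) U (𝓝 (dist (f a) (f b))) := by
  have hlim (a b : I) : ∃ d, Tendsto (fun n => dist (F n a) (F n b)) U (𝓝 d) := by
    obtain ⟨D, hD⟩ := hF a b
    obtain ⟨d, -, hd⟩ := isCompact_Icc.ultrafilter_le_nhds (U.map fun n => dist (F n a) (F n b))
      (tendsto_principal.2 (.of_forall fun n => ⟨dist_nonneg, hD n⟩))
    exact ⟨d, hd⟩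
  choose d hd using hlim
  let _ : PseudoMetricSpace I :=
    { dist := d
      dist_self := fun a => tendsto_nhds_unique (hd a a) (by simp)
      dist_comm := fun a b => tendsto_nhds_unique (hd a b) (by simpa only [dist_comm] using hd b a)
      dist_triangle := fun a b c => le_of_tendsto_of_tendsto' (hd a c) ((hd a b).add (hd b c))
        fun n => dist_triangle _ _ _ }
  exact ⟨UniformSpace.Completion I, inferInstance, inferInstance, (↑),
    UniformSpace.Completion.denseRange_coe, fun a b => by
      rw [UniformSpace.Completion.dist_eq]; exact hd a b⟩

variable {Z : Type*} [PseudoMetricSpace Z] {f : I → Z} [TopologicalSpace I]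

theorem tendsto_dist_apply_apply
    (hf : ∀ a b, Tendsto (fun n => dist (F n a) (F n b)) U (𝓝 (dist (f a) (f b))))
    (hF : ∀ a, ∀ ε > 0, ∀ᶠ b in 𝓝 a, ∀ n, dist (F n b) (F n a) < ε) {a b : I} {u v : ν → I}
    (hu : Tendsto u U (𝓝 a)) (hv : Tendsto v U (𝓝 b)) :
    Tendsto (fun n => dist (F n (u n)) (F n (v n))) U (𝓝 (dist (f a) (f b))) := by
  have hzero {a : I} {u : ν → I} (hu : Tendsto u U (𝓝 a)) :
      Tendsto (fun n => dist (F n (u n)) (F n a)) U (𝓝 0) :=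
    tendsto_order.2 ⟨fun _ h => .of_forall fun n => h.trans_le dist_nonneg,
      fun ε hε => (hu.eventually (hF a ε hε)).mono fun n h => h n⟩
  refine (tendsto_iff_of_dist (squeeze_zero (fun _ => dist_nonneg)
    (fun n => dist_dist_dist_le _ _ _ _) ?_)).1 (hf a b)
  simpa only [dist_comm, add_zero] using (hzero hu).add (hzero hv)

theorem exists_dist_le_of_ultralimit
    (hf : ∀ a b, Tendsto (fun n => dist (F n a) (F n b)) U (𝓝 (dist (f a) (f b))))
    (hF : ∀ a, ∀ ε > 0, ∀ᶠ b in 𝓝 a, ∀ n, dist (F n b) (F n a) < ε) {K K' : Set I}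
    (hK : IsCompact K) (hK' : IsCompact K') {r : ν → ℝ} {r₀ : ℝ} (hr : Tendsto r U (𝓝 r₀))
    (h : ∀ n, ∃ a ∈ K, ∃ b ∈ K', dist (F n a) (F n b) ≤ r n) :
    ∃ a ∈ K, ∃ b ∈ K', dist (f a) (f b) ≤ r₀ := by
  choose u hu v hv huv using h
  obtain ⟨a, haK, ha⟩ := hK.ultrafilter_le_nhds (U.map u) (tendsto_principal.2 (.of_forall hu))
  obtain ⟨b, hbK, hb⟩ := hK'.ultrafilter_le_nhds (U.map v) (tendsto_principal.2 (.of_forall hv))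
  exact ⟨a, haK, b, hbK, le_of_tendsto_of_tendsto' (tendsto_dist_apply_apply hf hF ha hb) hr huv⟩

end Ultralimit

namespace CurveSystem

open Set Filter Topology

universe u

variable {ν : Type*} {S : Type u} [MetricSpace S] {Y : ν → Type*} [∀ n, MetricSpace (Y n)]
  {L : ν → ℝ≥0} (c : ∀ n, CurveSystem S (Y n) (L n))

theorem eventually_forall_dist_param_lt {B : ℝ≥0} (hB : ∀ n, L n ≤ B) (p : S ⊕ ℕ × unitInterval)
    {ε : ℝ} (hε : 0 < ε) : ∀ᶠ q in 𝓝 p, ∀ n, dist ((c n).param q) ((c n).param p) < ε := by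
  obtain a | ⟨j, t⟩ := p
  · rw [nhds_inl, eventually_map]
    filter_upwards [ball_mem_nhds a hε] with b hb n
    exact ((c n).isometry_emb.dist_eq b a).trans_lt hb
  · have hB' : (0 : ℝ) < B + 1 := by positivity
    rw [nhds_inr, eventually_map, nhds_prod_eq, nhds_discrete, pure_prod, eventually_map]
    filter_upwards [ball_mem_nhds t (div_pos hε hB')] with s hs n
    calc dist ((c n).curve j s) ((c n).curve j t) ≤ (c n).length j * dist s t :=
        ((c n).lipschitzWith_curve j).dist_le_mul s t
      _ ≤ (B + 1) * dist s t := by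
        gcongr
        exact (NNReal.coe_le_coe.2 (((c n).length_le j).trans (hB n))).trans (by simp)
      _ < ε := (lt_div_iff₀' hB').1 hs

variable {U : Ultrafilter ν} {B L₀ : ℝ≥0} {Z : Type*} [MetricSpace Z]
  {f : S ⊕ ℕ × unitInterval → Z}

theorem exists_dist_accumulate_le (hB : ∀ n, L n ≤ B)
    (hf : ∀ p q, Tendsto (fun n => dist ((c n).param p) ((c n).param q)) U (𝓝 (dist (f p) (f q))))
    {K : Set (S ⊕ ℕ × unitInterval)} (hK : IsCompact K) {k : ℕ} {r : ν → ℝ} {r₀ : ℝ}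
    (hr : Tendsto r U (𝓝 r₀))
    (h : ∀ n, ∃ p ∈ K, ∃ y ∈ (c n).stage k, dist ((c n).param p) y ≤ r n) :
    ∃ p ∈ K, ∃ y ∈ accumulate (fun j => range fun t => f (.inr (j, t))) k, dist (f p) y ≤ r₀ := by
  have hcurves : IsCompact (Sum.inr '' Iic k ×ˢ univ : Set (S ⊕ ℕ × unitInterval)) :=
    ((finite_Iic k).isCompact.prod isCompact_univ).image continuous_inr
  obtain ⟨p, hp, _, ⟨⟨j, t⟩, hjk, rfl⟩, hle⟩ := exists_dist_le_of_ultralimit hf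
    (fun p ε hε => eventually_forall_dist_param_lt c hB p hε) hK hcurves hr fun n => by
      obtain ⟨p, hp, y, hy, hle⟩ := h n
      obtain ⟨j, hjk, t, rfl⟩ := mem_accumulate.1 hy
      exact ⟨p, hp, .inr (j, t), mem_image_of_mem _ ⟨hjk, mem_univ t⟩, hle⟩
  exact ⟨p, hp, _, mem_accumulate.2 ⟨j, hjk.1, t, rfl⟩, hle⟩

theorem exists_param_eq [CompactSpace S] (hB : ∀ n, L n ≤ B) (hL : Tendsto L U (𝓝 L₀))
    (hf : ∀ p q, Tendsto (fun n => dist ((c n).param p) ((c n).param q)) U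
      (𝓝 (dist (f p) (f q)))) :
    ∃ c₀ : CurveSystem S Z L₀, c₀.param = f := by
  have hlength (j : ℕ) : ∃ ℓ, Tendsto (fun n => (c n).length j) U (𝓝 ℓ) := by
    obtain ⟨ℓ, -, hℓ⟩ := isCompact_Icc.ultrafilter_le_nhds (U.map fun n => (c n).length j)
      (tendsto_principal.2 (.of_forall fun n => ⟨zero_le, ((c n).length_le j).trans (hB n)⟩))
    exact ⟨ℓ, hℓ⟩
  choose ℓ hℓ using hlength
  refine ⟨⟨fun a => f (.inl a), fun j t => f (.inr (j, t)), ℓ, .of_dist_eq fun a b => ?_,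
    fun j => .of_dist_le_mul fun s t => ?_, fun k => ?_, fun j => ?_, fun {A} hA hne k => ?_⟩, ?_⟩
  · exact tendsto_nhds_unique (hf (.inl a) (.inl b))
      (tendsto_const_nhds.congr fun n => ((c n).isometry_emb.dist_eq a b).symm)
  · exact le_of_tendsto_of_tendsto' (hf (.inr (j, s)) (.inr (j, t)))
      ((NNReal.tendsto_coe.2 (hℓ j)).mul_const (dist s t))
      fun n => ((c n).lipschitzWith_curve j).dist_le_mul s t
  · exact le_of_tendsto_of_tendsto' (tendsto_finsetSum _ fun j _ => hℓ j) hL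
      fun n => (c n).sum_length_le k
  · obtain ⟨_, rfl, y, hy, hle⟩ := exists_dist_accumulate_le c hB hf
      (isCompact_singleton (x := .inr (j + 1, 0))) tendsto_const_nhds
      fun n => ⟨_, rfl, _, (c n).curve_zero_mem j, (dist_self _).le⟩
    exact dist_le_zero.1 hle ▸ hy
  · obtain ⟨_, ⟨a, ha, rfl⟩, y, hy, hle⟩ := exists_dist_accumulate_le c hB hf
      (hA.isClosed.isCompact.image continuous_inl)
      ((NNReal.tendsto_coe.2 hL).div_const ((k : ℝ) + 1)) fun n => by
        obtain ⟨a, ha, y, hy, hle⟩ := (c n).exists_dist_le hA hne k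
        exact ⟨_, mem_image_of_mem _ ha, y, hy, hle⟩
    exact ⟨a, ha, y, hy, hle⟩
  · exact Sum.elim_comp_inl_inr f

theorem exists_limit [CompactSpace S] {Y : ℕ → Type*} [∀ n, MetricSpace (Y n)] {L : ℕ → ℝ≥0}
    {L₀ : ℝ≥0} (hL : Tendsto L atTop (𝓝 L₀)) (c : ∀ n, CurveSystem S (Y n) (L n)) :
    ∃ (Z : Type u) (_ : MetricSpace Z) (_ : CompactSpace Z), Nonempty (CurveSystem S Z L₀) := by
  obtain ⟨B, hB⟩ := hL.bddAbove_range
  rw [mem_upperBounds, forall_mem_range] at hB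
  obtain ⟨Z, _, _, f, hdense, hf⟩ := exists_ultralimit (hyperfilter ℕ) (F := fun n => (c n).param)
    fun p q => ⟨2 * (diam (univ : Set S) + 2 * B), fun n => ((c n).dist_param_le p q).trans
      (by gcongr; exact hB n)⟩
  obtain ⟨c₀, rfl⟩ := exists_param_eq c hB (hL.mono_left Nat.hyperfilter_le_atTop) hf
  exact ⟨Z, inferInstance, c₀.compactSpace_of_denseRange_param hdense, ⟨c₀⟩⟩

end CurveSystem

/-- **Main theorem.** Let `S` be a compact metric space with `St(S) < ∞`. Then the
absolute Steiner invariant is realized: there exist a compact metric space `Z`, an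
isometric embedding `ι : S → Z` and a continuum `C ⊆ Z` such that `C ∪ ι(S)` is a
continuum and `H¹(C) = St(S) = St(ι(S), Z)`. -/
theorem absSteiner_realized (S : Type) [MetricSpace S] [CompactSpace S]
    (hfin : absSteiner S < ⊤) :
    ∃ (Z : Type) (_ : MetricSpace Z) (_ : CompactSpace Z) (ι : S → Z),
      Isometry ι ∧
      relSteiner Z (Set.range ι) = absSteiner S ∧
      ∃ C : Set Z, IsCompact C ∧ IsConnected C ∧
        IsCompact (C ∪ Set.range ι) ∧ IsConnected (C ∪ Set.range ι) ∧
        H1 Z C = absSteiner S := by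
  lift absSteiner S to ℝ≥0 using hfin.ne with s hs
  have hlt (n : ℕ) : absSteiner S < ↑(s + 1 / ((n : ℝ≥0) + 1)) := by
    rw [← hs, ENNReal.coe_lt_coe]
    exact lt_add_of_pos_right s (by positivity)
  choose X _ hX using fun n => exists_curveSystem_of_absSteiner_lt (hlt n)
  have hlim : Filter.Tendsto (fun n : ℕ => s + 1 / ((n : ℝ≥0) + 1)) Filter.atTop (nhds s) := by
    simpa using tendsto_one_div_add_atTop_nhds_zero_nat.const_add s
  obtain ⟨Z, _, _, ⟨c⟩⟩ := CurveSystem.exists_limit hlim fun n => (hX n).some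
  let _ : MeasurableSpace Z := borel Z
  have : BorelSpace Z := ⟨rfl⟩
  obtain ⟨C, hC, hCconn, hU, hUconn, hle⟩ := c.exists_continuum
  have habs : s ≤ relSteiner Z (Set.range c.emb) :=
    hs.trans_le (sInf_le ⟨Z, _, c.emb, c.isometry_emb, rfl⟩)
  have hrel : relSteiner Z (Set.range c.emb) ≤ H1 Z C :=
    sInf_le ⟨C, hC, hCconn, hU, hUconn, rfl⟩
  exact ⟨Z, _, inferInstance, c.emb, c.isometry_emb, le_antisymm (hrel.trans hle) habs, C, hC,
    hCconn, hU, hUconn, le_antisymm hle (habs.trans hrel)⟩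
end
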